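/- (Approximation of hierarchical composition functions by bounded-parameter DNNs.) Let a ≥ 1, ν ∈ [0,1), q ∈ ℕ, N ∈ ℕ^q, and let P ⊆ [β_min, β_max] × {1, …, d_max} be a finite constraint set with β_min > 0. Then there exist positive constants C̃_L, C̃_r, C̃_B and c_2 (depending on a, ν, N, P, K, F, C_Lip but not on n) such that for every f_0 : ℝ^d → ℝ following the hierarchical composition structure H(N, P) and every sufficiently large n ∈ ℕ, there exists a network f ∈ F_{ρν}^{DNN}(⌈C̃_L log₂ n⌉, ⌈C̃_r · max_{(β', d') ∈ P} n^{d'/(2(2β'+d'))}⌉, C̃_B) with sup_{x ∈ [−a,a]^d} |f(x) − f_0(x)| ≤ c_2 · max_{(β', d') ∈ P} n^{−β'/(2β'+d')}. -/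

import Mathlib

noncomputable section

/-- Leaky-ReLU activation. -/
def lrelu (ν x : ℝ) : ℝ := max x (ν * x)

/-- A fully connected Leaky-ReLU network with input dimension `d` and hidden width `r`:
a first affine layer `ℝ^d → ℝ^r`, a list of inner affine layers `ℝ^r → ℝ^r`, and an
output affine layer `ℝ^r → ℝ`.  Each affine layer except the last is followed by the
componentwise Leaky-ReLU activation.  The number of hidden layers (the depth) is
`hid.length + 1`. -/
structure LNet (d r : ℕ) where
  W0 : Fin r → Fin d → ℝ
  b0 : Fin r → ℝ
  hid : List ((Fin r → Fin r → ℝ) × (Fin r → ℝ))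
  Wout : Fin r → ℝ
  bout : ℝ

/-- Evaluation of a Leaky-ReLU network. -/
def LNet.eval (ν : ℝ) {d r : ℕ} (net : LNet d r) (x : Fin d → ℝ) : ℝ :=
  let h := net.hid.foldl
    (fun (h : Fin r → ℝ) p => fun i => lrelu ν ((∑ j, p.1 i j * h j) + p.2 i))
    (fun i => lrelu ν ((∑ j, net.W0 i j * x j) + net.b0 i))
  (∑ i, net.Wout i * h i) + net.bout

/-- All weights and biases of the network are bounded by `B` in absolute value. -/
def LNet.bounded {d r : ℕ} (net : LNet d r) (B : ℝ) : Prop :=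
  (∀ i j, |net.W0 i j| ≤ B) ∧ (∀ i, |net.b0 i| ≤ B) ∧
  (∀ p ∈ net.hid, (∀ i j, |p.1 i j| ≤ B) ∧ (∀ i, |p.2 i| ≤ B)) ∧
  (∀ i, |net.Wout i| ≤ B) ∧ |net.bout| ≤ B

/-- Membership in the class `F_{ρν}^{DNN}(L, r, B)` of Leaky-ReLU networks with
architecture `(L, (d, r, …, r, 1))` and all parameters bounded by `B`. -/
def memDNN (ν : ℝ) (d L r : ℕ) (B : ℝ) (f : (Fin d → ℝ) → ℝ) : Prop :=
  ∃ net : LNet d r, net.hid.length + 1 = L ∧ net.bounded B ∧ ∀ x, f x = net.eval ν x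

/-- The cube `[−a,a]^d`. -/
def cube (a : ℝ) (d : ℕ) : Set (Fin d → ℝ) := {x | ∀ i, x i ∈ Set.Icc (-a) a}

/-- Partial derivative of `f : ℝ^d → ℝ` in coordinate `i`. -/
def pder {d : ℕ} (i : Fin d) (f : (Fin d → ℝ) → ℝ) : (Fin d → ℝ) → ℝ :=
  fun x => fderiv ℝ f x (Pi.single i 1)

/-- Multi-index partial derivative `∂^α f = ∂_1^{α 1} ⋯ ∂_d^{α d} f`. -/
def pderm {d : ℕ} (α : Fin d → ℕ) (f : (Fin d → ℝ) → ℝ) : (Fin d → ℝ) → ℝ :=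
  (List.finRange d).foldr (fun i g => (pder i)^[α i] g) f

/-- Membership in the Hölder ball `H_d^β(K)` on `[−a,a]^d`: `f` is `⌊β⌋`-times
continuously differentiable and there are bounds `S α` on `|∂^α f|` over the cube for all
multi-indices with `|α|₁ < β`, and Hölder constants `H α` for `∂^α f` (with exponent
`β − ⌊β⌋`, with respect to the sup-norm) for all multi-indices with `|α|₁ = ⌊β⌋`, whose
total sum is at most `K`. -/
def memHolder (a : ℝ) (d : ℕ) (β K : ℝ) (f : (Fin d → ℝ) → ℝ) : Prop :=
  ContDiff ℝ (⌊β⌋₊ : ℕ∞) f ∧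
  ∃ S H : (Fin d → Fin (⌊β⌋₊ + 1)) → ℝ,
    (∀ α : Fin d → Fin (⌊β⌋₊ + 1), ((∑ i, (α i : ℕ) : ℕ) : ℝ) < β →
      ∀ x ∈ cube a d, |pderm (fun i => (α i : ℕ)) f x| ≤ S α) ∧
    (∀ α : Fin d → Fin (⌊β⌋₊ + 1), (∑ i, (α i : ℕ)) = ⌊β⌋₊ →
      ∀ x₁ ∈ cube a d, ∀ x₂ ∈ cube a d, x₁ ≠ x₂ →
        |pderm (fun i => (α i : ℕ)) f x₁ - pderm (fun i => (α i : ℕ)) f x₂| ≤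
          H α * ‖x₁ - x₂‖ ^ (β - (⌊β⌋₊ : ℝ))) ∧
    (∑ α ∈ Finset.univ.filter
        (fun α : Fin d → Fin (⌊β⌋₊ + 1) => ((∑ i, (α i : ℕ) : ℕ) : ℝ) < β), S α) +
      (∑ α ∈ Finset.univ.filter
        (fun α : Fin d → Fin (⌊β⌋₊ + 1) => (∑ i, (α i : ℕ)) = ⌊β⌋₊), H α) ≤ K

/-- `f : ℝ^d → ℝ` follows the hierarchical composition structure `H(N, P)` (with constants
`K, F, C_Lip` and `N_q := 1`): there are functions `f_{l,i}` (`0 ≤ l ≤ q`, `0 ≤ i < N_l`)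
such that each `f_{0,i}` is a coordinate projection, each `f_{l,i}` (`1 ≤ l ≤ q`) is
obtained by applying a `C_Lip`-Lipschitz function `g_{l,i} ∈ H_{d_{l,i}}^{β_{l,i}}(K)` with
`(β_{l,i}, d_{l,i}) ∈ P`, `Σᵢ d_{l,i} = N_{l−1}` and `‖g_{l,i}‖_∞ ≤ F` to consecutive
blocks of the previous level, and `f = f_{q,1}`. -/
def followsHCS (a : ℝ) (d q : ℕ) (N : ℕ → ℕ) (P : Finset (ℝ × ℕ)) (K F CLip : ℝ)
    (f : (Fin d → ℝ) → ℝ) : Prop :=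
  0 < q ∧ N q = 1 ∧
  ∃ (fl : ℕ → ℕ → (Fin d → ℝ) → ℝ)
    (βh : ℕ → ℕ → ℝ) (dh : ℕ → ℕ → ℕ)
    (g : (l : ℕ) → (i : ℕ) → (Fin (dh l i) → ℝ) → ℝ),
    (∀ i < N 0, ∃ j : Fin d, ∀ x, fl 0 i x = x j) ∧
    (∀ l, 1 ≤ l → l ≤ q → ∀ i < N l,
      (βh l i, dh l i) ∈ P ∧
      (∀ y z : Fin (dh l i) → ℝ,
        |g l i y - g l i z| ≤ CLip * Real.sqrt (∑ j, (y j - z j) ^ 2)) ∧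
      memHolder (max a (2 * F)) (dh l i) (βh l i) K (g l i) ∧
      (∀ y, |g l i y| ≤ F) ∧
      (∀ x, fl l i x =
        g l i (fun j => fl (l - 1) ((∑ i' ∈ Finset.range i, dh l i') + j) x))) ∧
    (∀ l, 1 ≤ l → l ≤ q → (∑ i ∈ Finset.range (N l), dh l i) = N (l - 1)) ∧
    (∀ x, f x = fl q 0 x)

/-- `max_{(β',d') ∈ P} n^{−β'/(2β'+d')}`, the hierarchical-composition approximation rate. -/
def maxRate (P : Finset (ℝ × ℕ)) (hP : P.Nonempty) (n : ℕ) : ℝ :=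
  P.sup' hP fun p => (n : ℝ) ^ (-(p.1 / (2 * p.1 + p.2)))

/-- `max_{(β',d') ∈ P} n^{d'/(2(2β'+d'))}`, which governs the network width. -/
def maxWidthExp (P : Finset (ℝ × ℕ)) (hP : P.Nonempty) (n : ℕ) : ℝ :=
  P.sup' hP fun p => (n : ℝ) ^ ((p.2 : ℝ) / (2 * (2 * p.1 + p.2)))


/-- ReLU. -/
def rl (x : ℝ) : ℝ := max x 0

/-- Affine maps with parameters bounded by `B`. -/
def Lay (B : ℝ) {ι κ : Type} [Fintype ι] (f : (ι → ℝ) → κ → ℝ) : Prop :=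
  ∃ (A : κ → ι → ℝ) (b : κ → ℝ), (∀ k i, |A k i| ≤ B) ∧ (∀ k, |b k| ≤ B) ∧
    ∀ x k, f x k = ∑ i, A k i * x i + b k

/-- ReLU networks with `L` hidden layers, hidden widths at most `W`, parameters at most `B`. -/
def Net (B : ℝ) (W : ℕ) {ι : Type} [Fintype ι] : (L : ℕ) → {κ : Type} →
    ((ι → ℝ) → κ → ℝ) → Prop
  | 0, _, f => Lay B f
  | L + 1, κ, f => ∃ (μ : Type) (_ : Fintype μ) (h : (ι → ℝ) → μ → ℝ) (g : (μ → ℝ) → κ → ℝ),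
      Net B W L h ∧ Fintype.card μ ≤ W ∧ Lay B g ∧ ∀ x, f x = g (fun m => rl (h x m))

theorem rl_sub (x : ℝ) : rl x - rl (-x) = x := by
  unfold rl
  rcases le_total x 0 with h | h
  · rw [max_eq_right h, max_eq_left (by linarith)]; ring
  · rw [max_eq_left h, max_eq_right (by linarith)]; ring

theorem rl_nonneg (x : ℝ) : 0 ≤ rl x := le_max_right _ _
theorem rl_of_nonneg {x : ℝ} (h : 0 ≤ x) : rl x = x := max_eq_left h
theorem rl_of_nonpos {x : ℝ} (h : x ≤ 0) : rl x = 0 := max_eq_right h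

section calculus
variable {ι κ μ : Type} [Fintype ι]

theorem Lay.mono {B B' : ℝ} (hB : B ≤ B') {f : (ι → ℝ) → κ → ℝ} (h : Lay B f) : Lay B' f := by
  obtain ⟨A, b, h1, h2, h3⟩ := h
  exact ⟨A, b, fun k i => (h1 k i).trans hB, fun k => (h2 k).trans hB, h3⟩

theorem Net.mono {B B' : ℝ} {W W' : ℕ} (hB : B ≤ B') (hW : W ≤ W') :
    ∀ {L : ℕ} {κ : Type} {f : (ι → ℝ) → κ → ℝ}, Net B W L f → Net B' W' L f
  | 0, _, _, h => Lay.mono hB h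
  | _ + 1, _, _, ⟨μ, i, h, g, h1, h2, h3, h4⟩ =>
    ⟨μ, i, h, g, Net.mono hB hW h1, h2.trans hW, h3.mono hB, h4⟩

theorem Net.reindex {B : ℝ} {W L : ℕ} {f : (ι → ℝ) → κ → ℝ} (h : Net B W L f) (e : μ → κ) :
    Net B W L (fun x m => f x (e m)) := by
  cases L with
  | zero =>
    obtain ⟨A, b, h1, h2, h3⟩ := h
    exact ⟨fun m => A (e m), fun m => b (e m), fun k i => h1 _ i, fun k => h2 _, fun x k => h3 _ _⟩
  | succ L =>
    obtain ⟨μ, i, h, g, hh, hc, ⟨A, b, h1, h2, h3⟩, h4⟩ := h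
    refine ⟨μ, i, h, fun y m => g y (e m), hh, hc, ⟨fun m => A (e m), fun m => b (e m),
      fun k i => h1 _ i, fun k => h2 _, fun x k => h3 _ _⟩, fun x => ?_⟩
    simp only [h4 x]

/-- doubled output `(f, -f)` -/
theorem Net.double {B : ℝ} {W L : ℕ} {f : (ι → ℝ) → κ → ℝ} (h : Net B W L f) :
    Net B W L (fun x => Sum.elim (f x) (fun k => - f x k)) := by
  have key : ∀ {ι : Type} [Fintype ι] {f : (ι → ℝ) → κ → ℝ}, Lay B f →
      Lay B (fun x => Sum.elim (f x) (fun k => - f x k)) := by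
    rintro ι _ f ⟨A, b, h1, h2, h3⟩
    refine ⟨Sum.elim A (fun k i => - A k i), Sum.elim b (fun k => - b k), ?_, ?_, ?_⟩
    · rintro (k | k) i
      · exact h1 k i
      · simpa using h1 k i
    · rintro (k | k)
      · exact h2 k
      · simpa using h2 k
    · rintro x (k | k)
      · exact h3 x k
      · simp only [Sum.elim_inr, h3 x k, neg_mul, Finset.sum_neg_distrib]; ring
  cases L with
  | zero => exact key h
  | succ L =>
    obtain ⟨μ, i, h, g, hh, hc, hg, h4⟩ := h
    refine ⟨μ, i, h, fun y => Sum.elim (g y) (fun k => - g y k), hh, hc, key hg, fun x => ?_⟩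
    simp only [h4 x]

theorem Net.comp_aff [Fintype κ] {B : ℝ} {W L : ℕ} {f : (ι → ℝ) → κ → ℝ} (h : Net B W L f)
    {g : (κ → ℝ) → μ → ℝ} (hg : Lay B g) (hW : 2 * Fintype.card κ ≤ W) :
    Net B W (L + 1) (fun x => g (f x)) := by
  obtain ⟨A, b, h1, h2, h3⟩ := hg
  refine ⟨κ ⊕ κ, inferInstance, _,
    fun y m => ∑ s, Sum.elim (A m) (fun k => - A m k) s * y s + b m, h.double, ?_,
    ⟨fun m => Sum.elim (A m) (fun k => - A m k), b, ?_, h2, fun _ _ => rfl⟩, ?_⟩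
  · rw [Fintype.card_sum]; omega
  · rintro m (k | k)
    · exact h1 m k
    · simpa using h1 m k
  · intro x
    funext m
    simp only [h3]
    simp only [Fintype.sum_sum_type, Sum.elim_inl, Sum.elim_inr]
    rw [← Finset.sum_add_distrib]
    congr 1
    apply Finset.sum_congr rfl
    intro k _
    have := rl_sub (f x k)
    nth_rewrite 1 [← this]
    ring

theorem Net.comp [Fintype κ] {B : ℝ} {W L1 : ℕ} {f : (ι → ℝ) → κ → ℝ} (h : Net B W L1 f)
    (hW : 2 * Fintype.card κ ≤ W) : ∀ {L2 : ℕ} {μ : Type} {g : (κ → ℝ) → μ → ℝ},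
    Net B W L2 g → Net B W (L1 + 1 + L2) (fun x => g (f x))
  | 0, _, _, hg => h.comp_aff hg hW
  | _ + 1, _, _, ⟨ν, i, h', g', a1, a2, a3, a4⟩ =>
    ⟨ν, i, fun x => h' (f x), g', Net.comp h hW a1, a2, a3, fun x => a4 (f x)⟩

theorem Lay.sel {B : ℝ} (hB : 1 ≤ B) (e : κ → ι) :
    Lay B (fun (x : ι → ℝ) k => x (e k)) := by
  classical
  refine ⟨fun k i => if i = e k then 1 else 0, fun _ => 0, ?_, ?_, ?_⟩
  · intro k i; dsimp only; split_ifs <;> simp <;> linarith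
  · intro k; simp; linarith
  · intro x k; simp

theorem Net.pad1 [Fintype κ] {B : ℝ} {W L : ℕ} {f : (ι → ℝ) → κ → ℝ} (h : Net B W L f)
    (hB : 1 ≤ B) (hW : 2 * Fintype.card κ ≤ W) : Net B W (L + 1) f :=
  h.comp_aff (g := fun y k => y k) (Lay.sel hB id) hW

theorem Net.pad [Fintype κ] {B : ℝ} {W L L' : ℕ} {f : (ι → ℝ) → κ → ℝ} (h : Net B W L f)
    (hB : 1 ≤ B) (hW : 2 * Fintype.card κ ≤ W) (hL : L ≤ L') : Net B W L' f := by
  induction L', hL using Nat.le_induction with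
  | base => exact h
  | succ n _ ih => exact ih.pad1 hB hW

theorem Net.sum {B : ℝ} {W1 W2 : ℕ} : ∀ {L : ℕ} {κ μ : Type} {f : (ι → ℝ) → κ → ℝ}
    {g : (ι → ℝ) → μ → ℝ}, Net B W1 L f → Net B W2 L g → 0 ≤ B →
    Net B (W1 + W2) L (fun x => Sum.elim (f x) (g x))
  | 0, κ, μ, f, g, ⟨A, b, h1, h2, h3⟩, ⟨A', b', h1', h2', h3'⟩, hB =>
    ⟨Sum.elim A A', Sum.elim b b', by rintro (k | k) i; exacts [h1 k i, h1' k i],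
      by rintro (k | k); exacts [h2 k, h2' k],
      by rintro x (k | k); exacts [h3 x k, h3' x k]⟩
  | L + 1, κ, μ, f, g, ⟨ν, i, h, k, a1, a2, ⟨A, b, h1, h2, h3⟩, a4⟩,
      ⟨ν', i', h', k', a1', a2', ⟨A', b', h1', h2', h3'⟩, a4'⟩, hB => by
    refine ⟨ν ⊕ ν', inferInstance, fun x => Sum.elim (h x) (h' x),
      fun y => Sum.elim (k fun m => y (Sum.inl m)) (k' fun m => y (Sum.inr m)),
      Net.sum a1 a1' hB, ?_, ?_, ?_⟩
    · rw [Fintype.card_sum]; omega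
    · refine ⟨Sum.elim (fun j => Sum.elim (A j) (fun _ => 0)) (fun j => Sum.elim (fun _ => 0) (A' j)),
        Sum.elim b b', ?_, ?_, ?_⟩
      · rintro (j | j) (l | l)
        · exact h1 _ _
        · simpa using hB
        · simpa using hB
        · exact h1' _ _
      · rintro (j | j)
        · exact h2 _
        · exact h2' _
      · rintro x (j | j)
        · simp [Fintype.sum_sum_type, h3]
        · simp [Fintype.sum_sum_type, h3']
    · intro x
      simp only [a4, a4']
      rfl

theorem Net.family {I : Type} [Fintype I] {B : ℝ} (hB : 0 ≤ B) {w : I → ℕ} :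
    ∀ {L : ℕ} {κ : I → Type} {f : (i : I) → (ι → ℝ) → κ i → ℝ}, (∀ i, Net B (w i) L (f i)) →
      Net B (∑ i, w i) L (fun x (s : Σ i, κ i) => f s.1 x s.2)
  | 0, κ, f, h => by
    have h' : ∀ i, Lay B (f i) := h
    unfold Lay at h'
    choose A b h1 h2 h3 using h'
    exact ⟨fun s => A s.1 s.2, fun s => b s.1 s.2, fun s i => h1 _ _ i, fun s => h2 _ _,
      fun x s => h3 _ _ _⟩
  | L + 1, κ, f, h => by
    classical
    have h' : ∀ i, ∃ (μ : Type) (_ : Fintype μ) (h : (ι → ℝ) → μ → ℝ) (g : (μ → ℝ) → κ i → ℝ),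
      Net B (w i) L h ∧ Fintype.card μ ≤ (w i) ∧ Lay B g ∧ ∀ x, f i x = g (fun m => rl (h x m)) := h
    unfold Lay at h'
    choose ν i h k a1 a2 a3 a4 using h'
    choose A b h1 h2 h3 using a3
    refine ⟨Σ i, ν i, inferInstance, fun x s => h s.1 x s.2,
      fun y s => k s.1 (fun m => y ⟨s.1, m⟩) s.2, Net.family hB a1, ?_, ?_, ?_⟩
    · rw [Fintype.card_sigma]
      exact Finset.sum_le_sum fun i _ => a2 i
    · refine ⟨fun s t => if e : t.1 = s.1 then A s.1 s.2 (e ▸ t.2) else 0, fun s => b s.1 s.2,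
        ?_, fun s => h2 _ _, ?_⟩
      · rintro s t
        dsimp only
        split_ifs
        · exact h1 _ _ _
        · simpa using hB
      · rintro x ⟨s1, s2⟩
        dsimp only
        rw [h3, Fintype.sum_sigma, Finset.sum_eq_single s1]
        · simp
        · intro t _ ht
          simp [ht]
        · simp
    · intro x
      funext s
      simp only [a4]

/-- scalar families -/
theorem Net.fam {I : Type} [Fintype I] {B : ℝ} (hB : 0 ≤ B) {w : I → ℕ} {L : ℕ}
    {f : I → (ι → ℝ) → ℝ} (h : ∀ i, Net B (w i) L (fun x (_ : Unit) => f i x)) :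
    Net B (∑ i, w i) L (fun x i => f i x) :=
  (Net.family hB h).reindex (fun i => ⟨i, ()⟩)

/-- postcomposition with twice the identity, repeated -/
theorem Net.amplify [Fintype κ] {B : ℝ} {W L : ℕ} {f : (ι → ℝ) → κ → ℝ} (h : Net B W L f)
    (hB : 2 ≤ B) (hW : 2 * Fintype.card κ ≤ W) (e : ℕ) :
    Net B W (L + e) (fun x k => 2 ^ e * f x k) := by
  classical
  induction e with
  | zero => simpa using h
  | succ e ih =>
    have : Lay B (fun (x : κ → ℝ) k => 2 * x k) := by
      refine ⟨fun k i => if i = k then 2 else 0, fun _ => 0, ?_, ?_, ?_⟩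
      · intro k i; dsimp only; split_ifs <;> simp <;> linarith
      · intro k; simp; linarith
      · intro x k; simp
    have h2 := ih.comp_aff this hW
    have h3 : (fun (x : ι → ℝ) k => 2 ^ (e + 1) * f x k) = fun x k => 2 * (2 ^ e * f x k) := by
      funext x k; ring
    rw [h3]
    exact h2

/-- clipping to `[0,1]` -/
def clip01 (z : ℝ) : ℝ := rl z - rl (z - 1)

theorem Net.clip [Fintype κ] {B : ℝ} {W L : ℕ} {f : (ι → ℝ) → κ → ℝ} (h : Net B W L f)
    (hB : 1 ≤ B) (hW : 2 * Fintype.card κ ≤ W) :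
    Net B W (L + 2) (fun x k => clip01 (f x k)) := by
  classical
  have : Net B W 1 (fun (x : κ → ℝ) k => clip01 (x k)) := by
    refine ⟨κ ⊕ κ, inferInstance, fun x => Sum.elim x (fun k => x k - 1),
      fun y k => y (Sum.inl k) - y (Sum.inr k), ?_, ?_, ?_, ?_⟩
    · refine ⟨Sum.elim (fun k i => if i = k then 1 else 0) (fun k i => if i = k then 1 else 0),
        Sum.elim (fun _ => 0) (fun _ => -1),
        ?_, ?_, ?_⟩
      · rintro (k | k) i <;> simp only [Sum.elim_inl, Sum.elim_inr] <;> split_ifs <;> simp <;> linarith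
      · rintro (k | k) <;> simp <;> linarith
      · rintro x (k | k) <;> simp [sub_eq_add_neg]
    · rw [Fintype.card_sum]; omega
    · refine ⟨fun k => Sum.elim (fun i => if i = k then 1 else 0) (fun i => if i = k then -1 else 0),
        fun _ => 0, ?_, ?_, ?_⟩
      · rintro k (i | i) <;> simp only [Sum.elim_inl, Sum.elim_inr] <;> split_ifs <;> simp <;> linarith
      · intro k; simp; linarith
      · intro x k
        simp [Fintype.sum_sum_type]; ring
    · intro x
      funext k
      simp [clip01]
  exact h.comp hW this

end calculus

theorem rl_eq_lrelu {ν : ℝ} (h0 : 0 ≤ ν) (h1 : ν < 1) (x : ℝ) :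
    rl x = (1 / (1 - ν ^ 2)) * lrelu ν x + (ν / (1 - ν ^ 2)) * lrelu ν (-x) := by
  have h2 : (1 - ν ^ 2) ≠ 0 := by nlinarith
  unfold rl lrelu
  rcases le_total x 0 with h | h
  · rw [max_eq_right h, max_eq_right (by nlinarith), max_eq_left (by nlinarith)]
    field_simp; ring
  · rw [max_eq_left h, max_eq_left (by nlinarith), max_eq_right (by nlinarith)]
    field_simp; ring

theorem lrelu_step {ν : ℝ} (h0 : 0 ≤ ν) (h1 : ν < 1) {B B' : ℝ} (hB : 0 ≤ B)
    (hB' : B / (1 - ν ^ 2) ≤ B') {W r : ℕ} (hr : 2 * W ≤ r) {μ κ σ : Type} [Fintype μ] [Fintype σ]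
    (hμ : Fintype.card μ ≤ W) {C : μ → σ → ℝ} {c : μ → ℝ} (hC : ∀ m i, |C m i| ≤ B')
    (hc : ∀ m, |c m| ≤ B') {g : (μ → ℝ) → κ → ℝ} (hg : Lay B g) :
    ∃ (A : Fin r → σ → ℝ) (b : Fin r → ℝ) (Wo : κ → Fin r → ℝ) (bo : κ → ℝ),
      (∀ i j, |A i j| ≤ B') ∧ (∀ i, |b i| ≤ B') ∧ (∀ k i, |Wo k i| ≤ B') ∧ (∀ k, |bo k| ≤ B') ∧
      ∀ (y : σ → ℝ) (k : κ), g (fun m => rl (∑ i, C m i * y i + c m)) k =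
        ∑ i, Wo k i * lrelu ν (∑ j, A i j * y j + b i) + bo k := by
  obtain ⟨G, v, g1, g2, g3⟩ := hg
  have hp : 0 < 1 - ν ^ 2 := by nlinarith
  have hBB : B ≤ B / (1 - ν ^ 2) := by
    rw [le_div_iff₀ hp]; nlinarith [sq_nonneg ν]
  have hB'0 : 0 ≤ B' := by linarith
  obtain ⟨e⟩ : Nonempty (μ ⊕ μ ↪ Fin r) := by
    rw [Function.Embedding.nonempty_iff_card_le]
    simp; omega
  refine ⟨Function.extend e (Sum.elim C (fun m i => - C m i)) 0,
    Function.extend e (Sum.elim c (fun m => - c m)) 0,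
    fun k => Function.extend e (Sum.elim (fun m => G k m * (1 / (1 - ν ^ 2)))
      (fun m => G k m * (ν / (1 - ν ^ 2)))) 0, v, ?_, ?_, ?_, ?_, ?_⟩
  · intro i j
    by_cases hi : ∃ s, e s = i
    · obtain ⟨s, rfl⟩ := hi
      rw [e.injective.extend_apply]
      rcases s with m | m
      · exact hC m j
      · simpa using hC m j
    · rw [Function.extend_apply' _ _ _ hi]; simpa using hB'0
  · intro i
    by_cases hi : ∃ s, e s = i
    · obtain ⟨s, rfl⟩ := hi
      rw [e.injective.extend_apply]
      rcases s with m | m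
      · exact hc m
      · simpa using hc m
    · rw [Function.extend_apply' _ _ _ hi]; simpa using hB'0
  · intro k i
    dsimp only
    by_cases hi : ∃ s, e s = i
    · obtain ⟨s, rfl⟩ := hi
      rw [e.injective.extend_apply]
      refine le_trans ?_ hB'
      rcases s with m | m
      · simp only [Sum.elim_inl]
        rw [abs_mul, abs_of_pos (by positivity : 0 < 1 / (1 - ν ^ 2)), mul_one_div]
        gcongr
        exact g1 k m
      · simp only [Sum.elim_inr]
        rw [abs_mul, abs_of_nonneg (by positivity : 0 ≤ ν / (1 - ν ^ 2)), ← mul_div_assoc]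
        gcongr
        have := g1 k m
        have := abs_nonneg (G k m)
        nlinarith
    · rw [Function.extend_apply' _ _ _ hi]; simpa using hB'0
  · intro k
    exact (g2 k).trans (hBB.trans hB')
  · intro y k
    rw [g3]
    congr 1
    rw [← Fintype.sum_of_injective e e.injective
      (fun s => Sum.elim (fun m => G k m * (1 / (1 - ν ^ 2)))
        (fun m => G k m * (ν / (1 - ν ^ 2))) s *
        lrelu ν (∑ j, (Sum.elim C (fun m i => - C m i) s) j * y j + Sum.elim c (fun m => - c m) s))]
    · rw [Fintype.sum_sum_type, ← Finset.sum_add_distrib]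
      apply Finset.sum_congr rfl
      intro m _
      rw [rl_eq_lrelu h0 h1]
      simp only [Sum.elim_inl, Sum.elim_inr, neg_mul, Finset.sum_neg_distrib]
      rw [neg_add]
      ring
    · intro i hi
      have : ¬ ∃ s, e s = i := hi
      dsimp only
      rw [Function.extend_apply' _ _ _ this]
      simp
    · intro s
      dsimp only
      rw [e.injective.extend_apply, e.injective.extend_apply, e.injective.extend_apply]

theorem Net.toLNet {ν : ℝ} (h0 : 0 ≤ ν) (h1 : ν < 1) {B B' : ℝ} (hB : 0 ≤ B)
    (hB' : B / (1 - ν ^ 2) ≤ B') {W r : ℕ} (hr : 2 * W ≤ r) {d : ℕ} :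
    ∀ {L : ℕ} {κ : Type} {f : (Fin d → ℝ) → κ → ℝ}, Net B W (L + 1) f →
    ∃ (W0 : Fin r → Fin d → ℝ) (b0 : Fin r → ℝ) (hid : List ((Fin r → Fin r → ℝ) × (Fin r → ℝ)))
      (Wo : κ → Fin r → ℝ) (bo : κ → ℝ), hid.length = L ∧
      (∀ i j, |W0 i j| ≤ B') ∧ (∀ i, |b0 i| ≤ B') ∧
      (∀ p ∈ hid, (∀ i j, |p.1 i j| ≤ B') ∧ (∀ i, |p.2 i| ≤ B')) ∧
      (∀ k i, |Wo k i| ≤ B') ∧ (∀ k, |bo k| ≤ B') ∧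
      ∀ x k, f x k = (∑ i, Wo k i * (hid.foldl
        (fun (h : Fin r → ℝ) p => fun i => lrelu ν ((∑ j, p.1 i j * h j) + p.2 i))
        (fun i => lrelu ν ((∑ j, W0 i j * x j) + b0 i))) i) + bo k := by
  have hp : 0 < 1 - ν ^ 2 := by nlinarith
  have hBB : B ≤ B / (1 - ν ^ 2) := by
    rw [le_div_iff₀ hp]; nlinarith [sq_nonneg ν]
  intro L
  induction L with
  | zero =>
    rintro κ f ⟨μ, _, h, g, ⟨C, c, c1, c2, c3⟩, hμ, hg, hf⟩
    obtain ⟨A, b, Wo, bo, a1, a2, a3, a4, a5⟩ := lrelu_step h0 h1 hB hB' hr hμ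
      (fun m i => (c1 m i).trans (hBB.trans hB')) (fun m => (c2 m).trans (hBB.trans hB')) hg
    refine ⟨A, b, [], Wo, bo, rfl, a1, a2, by simp, a3, a4, ?_⟩
    intro x k
    rw [hf]
    simp only [c3, a5, List.foldl_nil]
  | succ L ih =>
    rintro κ f ⟨μ, _, h, g, hh, hμ, hg, hf⟩
    obtain ⟨W0, b0, hid, C, c, l0, l1, l2, l3, c1, c2, c3⟩ := ih hh
    obtain ⟨A, b, Wo, bo, a1, a2, a3, a4, a5⟩ := lrelu_step h0 h1 hB hB' hr hμ c1 c2 hg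
    refine ⟨W0, b0, hid ++ [(A, b)], Wo, bo, by simp [l0], l1, l2, ?_, a3, a4, ?_⟩
    · intro p hp
      rcases List.mem_append.1 hp with hp | hp
      · exact l3 p hp
      · rw [List.mem_singleton] at hp
        subst hp
        exact ⟨a1, a2⟩
    · intro x k
      rw [hf]
      simp only [c3, a5, List.foldl_append, List.foldl_cons, List.foldl_nil]

theorem Net.memDNN {ν : ℝ} (h0 : 0 ≤ ν) (h1 : ν < 1) {B B' : ℝ} (hB : 0 ≤ B)
    (hB' : B / (1 - ν ^ 2) ≤ B') {W r : ℕ} (hr : 2 * W ≤ r) {d L : ℕ} (hL : 0 < L)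
    {f : (Fin d → ℝ) → ℝ} (hf : Net B W L (fun x (_ : Unit) => f x)) : memDNN ν d L r B' f := by
  obtain ⟨L, rfl⟩ : ∃ L', L = L' + 1 := ⟨L - 1, by omega⟩
  obtain ⟨W0, b0, hid, C, c, l0, l1, l2, l3, c1, c2, c3⟩ := hf.toLNet h0 h1 hB hB' hr
  exact ⟨⟨W0, b0, hid, C (), c ()⟩, by simp [l0], ⟨l1, l2, l3, c1 (), c2 ()⟩, fun x => c3 x ()⟩

theorem Net.presel {ι κ μ : Type} [Fintype ι] [Fintype κ] {B : ℝ} {W L : ℕ}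
    {g : (κ → ℝ) → μ → ℝ} (h : Net B W L g) (hB : 1 ≤ B) (hW : 2 * Fintype.card κ ≤ W)
    (e : κ → ι) : Net B W (L + 1) (fun (x : ι → ℝ) => g (fun k => x (e k))) := by
  have h1 : Net B W 0 (fun (x : ι → ℝ) k => x (e k)) := Lay.sel hB e
  have := h1.comp hW h
  rwa [show 0 + 1 + L = L + 1 by ring] at this

/-- one tent-map step of the squaring network -/
def sqStep (k : ℕ) (y : Fin 3 → ℝ) : Fin 3 → ℝ :=
  ![2 * y 0 - 4 * y 1, 2 * y 0 - 4 * y 1 - 1 / 2, y 2 - (2 * y 0 - 4 * y 1) / 4 ^ (k + 1)]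

def sqNet : ℕ → (Unit → ℝ) → Fin 3 → ℝ
  | 0, x => ![x (), x () - 1 / 2, x ()]
  | k + 1, x => sqStep k (fun m => rl (sqNet k x m))

theorem sqStep_lay (k : ℕ) : Lay 4 (sqStep k) := by
  have h4 : (1 : ℝ) ≤ 4 ^ (k + 1) := one_le_pow₀ (by norm_num)
  refine ⟨![![2, -4, 0], ![2, -4, 0], ![-2 / 4 ^ (k + 1), 4 / 4 ^ (k + 1), 1]],
    ![0, - 1 / 2, 0], ?_, ?_, ?_⟩
  · intro i j
    fin_cases i <;> fin_cases j <;> simp [abs_div] <;> try norm_num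
    · rw [div_le_iff₀ (by positivity)]; linarith
    · rw [div_le_iff₀ (by positivity)]; linarith
  · intro i; fin_cases i <;> simp [abs_div]; norm_num
  · intro x i
    fin_cases i <;> simp [sqStep, Fin.sum_univ_three] <;> ring

theorem sqNet_net (k : ℕ) : Net 4 3 k (sqNet k) := by
  induction k with
  | zero =>
    refine ⟨fun _ _ => 1, ![0, -1 / 2, 0], ?_, ?_, ?_⟩
    · intro i j; simp
    · intro i; fin_cases i <;> simp [abs_div]; norm_num
    · intro x i; fin_cases i <;> simp [sqNet]; ring
  | succ k ih => exact ⟨Fin 3, inferInstance, sqNet k, sqStep k, ih, by simp, sqStep_lay k, fun _ => rfl⟩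

theorem sqNet_inv (k : ℕ) (x : Unit → ℝ) (h0 : 0 ≤ x ()) (h1 : x () ≤ 1) :
    0 ≤ sqNet k x 0 ∧ sqNet k x 0 ≤ 1 ∧ sqNet k x 1 = sqNet k x 0 - 1 / 2 ∧
    x () ^ 2 = sqNet k x 2 - (sqNet k x 0 - sqNet k x 0 ^ 2) / 4 ^ k := by
  induction k with
  | zero => simp [sqNet, h0, h1]
  | succ k ih =>
    obtain ⟨a, b, c, e⟩ := ih
    have hp : (0 : ℝ) < 4 ^ k := by positivity
    have hA : 0 ≤ sqNet k x 2 := by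
      have : 0 ≤ (sqNet k x 0 - sqNet k x 0 ^ 2) / 4 ^ k := by
        apply div_nonneg _ hp.le; nlinarith
      nlinarith [sq_nonneg (x ())]
    have e0 : sqNet (k + 1) x 0 = 2 * rl (sqNet k x 0) - 4 * rl (sqNet k x 1) := by
      simp [sqNet, sqStep]
    have e1 : sqNet (k + 1) x 1 = sqNet (k + 1) x 0 - 1 / 2 := by
      simp [sqNet, sqStep]
    have e2 : sqNet (k + 1) x 2 = rl (sqNet k x 2) - sqNet (k + 1) x 0 / 4 ^ (k + 1) := by
      simp [sqNet, sqStep]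
    rw [e1, e2]
    rw [rl_of_nonneg a, c] at e0
    rw [rl_of_nonneg hA, e]
    generalize sqNet (k + 1) x 0 = s at *
    generalize sqNet k x 0 = t at *
    generalize sqNet k x 2 = A at *
    rcases le_total t (1 / 2) with h | h
    · rw [rl_of_nonpos (by linarith)] at e0
      refine ⟨by linarith, by linarith, rfl, ?_⟩
      rw [e0, pow_succ]; field_simp; ring
    · rw [rl_of_nonneg (by linarith)] at e0
      refine ⟨by linarith, by linarith, rfl, ?_⟩
      rw [e0, pow_succ]; field_simp; ring

theorem sqNet_err (k : ℕ) (x : Unit → ℝ) (h0 : 0 ≤ x ()) (h1 : x () ≤ 1) :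
    |sqNet k x 2 - x () ^ 2| ≤ 1 / 4 ^ k := by
  obtain ⟨a, b, c, e⟩ := sqNet_inv k x h0 h1
  rw [e, sub_sub_cancel, abs_of_nonneg]
  · gcongr; nlinarith [sq_nonneg (sqNet k x 0)]
  · apply div_nonneg _ (by positivity); nlinarith

theorem rl_add (x : ℝ) : rl x + rl (-x) = |x| := by
  unfold rl
  rcases le_total x 0 with h | h
  · rw [max_eq_right h, max_eq_left (by linarith), abs_of_nonpos h]; ring
  · rw [max_eq_left h, max_eq_right (by linarith), abs_of_nonneg h]; ring

theorem mul_net (R : ℝ) (hR : 1 ≤ R) : ∃ C : ℕ, 2 ≤ C ∧ ∀ k : ℕ, ∃ φ : (Fin 2 → ℝ) → ℝ,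
    Net C C (C * (k + 1)) (fun x (_ : Unit) => φ x) ∧
    ∀ x, (∀ i, |x i| ≤ R) → |φ x - x 0 * x 1| ≤ C / 4 ^ k := by
  obtain ⟨C, hC⟩ := exists_nat_ge (2 * R ^ 2 + 10)
  have hR2 : 1 ≤ R ^ 2 := by nlinarith
  have hC10 : (10 : ℝ) ≤ C := by linarith
  have hCn : 10 ≤ C := by exact_mod_cast hC10
  refine ⟨C, by omega, fun k => ?_⟩
  have n1 : Net (C : ℝ) C 1 (fun (x : Fin 2 → ℝ) => ![|x 0 + x 1| / (2 * R), |x 0 - x 1| / (2 * R)]) := by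
    have hR' : 1 / (2 * R) ≤ 1 := by rw [div_le_one (by positivity)]; linarith
    have hRi : R⁻¹ * 2⁻¹ ≤ 1 := by rw [one_div, mul_inv] at hR'; linarith
    refine ⟨Fin 4, inferInstance, fun x => ![x 0 + x 1, -(x 0 + x 1), x 0 - x 1, -(x 0 - x 1)],
      fun y => ![(y 0 + y 1) / (2 * R), (y 2 + y 3) / (2 * R)], ?_, by simp; omega, ?_, ?_⟩
    · refine ⟨![![1, 1], ![-1, -1], ![1, -1], ![-1, 1]], fun _ => 0, ?_, ?_, ?_⟩
      · intro i j
        fin_cases i <;> fin_cases j <;> simp <;> linarith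
      · intro i; simp
      · intro x i
        fin_cases i <;> simp [Fin.sum_univ_two] <;> ring
    · refine ⟨![![1 / (2 * R), 1 / (2 * R), 0, 0], ![0, 0, 1 / (2 * R), 1 / (2 * R)]], fun _ => 0, ?_, ?_, ?_⟩
      · intro i j
        have : |1 / (2 * R)| ≤ C := by rw [abs_of_pos (by positivity)]; linarith
        fin_cases i <;> fin_cases j <;> simp only [Fin.zero_eta, Fin.mk_one, Fin.reduceFinMk, Fin.isValue, Matrix.cons_val, Matrix.cons_val_zero, Matrix.cons_val_one] <;> first | exact this | (simp)
      · intro i; simp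
      · intro x i
        fin_cases i <;> simp [Fin.sum_univ_four] <;> ring
    · intro x
      have e1 := rl_add (x 0 + x 1)
      have e2 := rl_add (x 0 - x 1)
      simp only [Matrix.cons_val_zero, Matrix.cons_val_one, Matrix.cons_val, e1, e2]
  have n2 : Net (C : ℝ) C (k + 1) (fun (x : Fin 2 → ℝ) i => sqNet k (fun _ => x i) 2) := by
    have := Net.fam (ι := Fin 2) (I := Fin 2) (B := 4) (w := fun _ => 3) (by norm_num)
      (f := fun i x => sqNet k (fun _ => x i) 2) (L := k + 1) (fun i =>
        (((sqNet_net k).reindex (fun _ : Unit => 2)).presel (by norm_num) (by simp) (fun _ => i)))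
    exact this.mono (by linarith) (by simp; omega)
  have n3 : Lay (C : ℝ) (fun (x : Fin 2 → ℝ) (_ : Unit) => R ^ 2 * (x 0 - x 1)) := by
    refine ⟨fun _ => ![R ^ 2, - R ^ 2], fun _ => 0, ?_, by simp, ?_⟩
    · intro i j
      fin_cases j <;> simp <;> rw [← sq_abs, sq_abs] <;> nlinarith
    · intro x i
      simp [Fin.sum_univ_two]; ring
  have n4 := (n1.comp (by simp; omega) n2).comp_aff n3 (by simp; omega)
  refine ⟨_, n4.pad (by linarith) (by simp; omega) (by nlinarith), ?_⟩
  intro x hx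
  have h0 := abs_le.1 (hx 0)
  have h1 := abs_le.1 (hx 1)
  have b1 := sqNet_err k (fun _ => |x 0 + x 1| / (2 * R)) (by positivity)
    (by rw [div_le_one (by positivity), abs_le]; constructor <;> linarith)
  have b2 := sqNet_err k (fun _ => |x 0 - x 1| / (2 * R)) (by positivity)
    (by rw [div_le_one (by positivity), abs_le]; constructor <;> linarith)
  simp only [Matrix.cons_val_zero, Matrix.cons_val_one]
  generalize sqNet k (fun _ => |x 0 + x 1| / (2 * R)) 2 = s1 at *
  generalize sqNet k (fun _ => |x 0 - x 1| / (2 * R)) 2 = s2 at *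
  have e : x 0 * x 1 = R ^ 2 * ((|x 0 + x 1| / (2 * R)) ^ 2 - (|x 0 - x 1| / (2 * R)) ^ 2) := by
    rw [div_pow, div_pow, sq_abs, sq_abs]; field_simp; ring
  rw [e, ← mul_sub, abs_mul, abs_of_pos (by positivity)]
  calc R ^ 2 * |s1 - s2 - ((|x 0 + x 1| / (2 * R)) ^ 2 - (|x 0 - x 1| / (2 * R)) ^ 2)|
      ≤ R ^ 2 * (2 * (1 / 4 ^ k)) := by
        gcongr
        rw [abs_le] at *
        constructor <;> linarith
    _ = (2 * R ^ 2) / 4 ^ k := by ring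
    _ ≤ C / 4 ^ k := by gcongr; linarith

theorem poly_net {σ : Type} [Fintype σ] (R : ℝ) (hR : 1 ≤ R) (p : MvPolynomial σ ℝ) :
    ∃ C : ℕ, 2 ≤ C ∧ (∀ x : σ → ℝ, (∀ i, |x i| ≤ R) → |MvPolynomial.eval x p| ≤ C) ∧
    ∀ k : ℕ, ∃ φ : (σ → ℝ) → ℝ, Net C C (C * (k + 1)) (fun x (_ : Unit) => φ x) ∧
    ∀ x, (∀ i, |x i| ≤ R) → |φ x - MvPolynomial.eval x p| ≤ C / 4 ^ k := by
  induction p using MvPolynomial.induction_on with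
  | C a =>
    obtain ⟨C, hC⟩ := exists_nat_ge (|a| + 2)
    have ha := abs_nonneg a
    have hC2 : (2 : ℝ) ≤ C := by linarith
    have hCn : 2 ≤ C := by exact_mod_cast hC2
    refine ⟨C, hCn, fun x _ => by simp; linarith, fun k => ⟨fun _ => a, ?_, fun x _ => by simp; positivity⟩⟩
    have : Net (C : ℝ) C 0 (fun (_ : σ → ℝ) (_ : Unit) => a) :=
      ⟨fun _ _ => 0, fun _ => a, by simp, fun _ => by linarith, by simp⟩
    exact this.pad (by linarith) (by simpa using hCn) (by omega)
  | add p q hp hq =>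
    obtain ⟨C1, c1, b1, h1⟩ := hp
    obtain ⟨C2, c2, b2, h2⟩ := hq
    refine ⟨C1 + C2, by omega, fun x hx => ?_, fun k => ?_⟩
    · rw [map_add]; push_cast
      exact (abs_add_le _ _).trans (add_le_add (b1 x hx) (b2 x hx))
    obtain ⟨φ, n1, e1⟩ := h1 k
    obtain ⟨ψ, n2, e2⟩ := h2 k
    have c1' : (2 : ℝ) ≤ C1 := by exact_mod_cast c1
    have c2' : (2 : ℝ) ≤ C2 := by exact_mod_cast c2
    have k1 : C1 * (k + 1) ≤ (C1 + C2) * (k + 1) - 1 := by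
      rw [add_mul]
      have : 0 < C2 * (k + 1) := by positivity
      omega
    have k2 : C2 * (k + 1) ≤ (C1 + C2) * (k + 1) - 1 := by
      rw [add_mul]
      have : 0 < C1 * (k + 1) := by positivity
      omega
    have k3 : (C1 + C2) * (k + 1) - 1 + 1 = (C1 + C2) * (k + 1) := by
      have : 0 < (C1 + C2) * (k + 1) := by positivity
      omega
    have m1 := (n1.pad (by linarith) (by simpa using c1) k1).mono
      (show (C1 : ℝ) ≤ C1 + C2 by linarith) le_rfl
    have m2 := (n2.pad (by linarith) (by simpa using c2) k2).mono
      (show (C2 : ℝ) ≤ C1 + C2 by linarith) le_rfl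
    have n3 : Lay ((C1 : ℝ) + C2) (fun (x : Unit ⊕ Unit → ℝ) (_ : Unit) => x (Sum.inl ()) + x (Sum.inr ())) := by
      refine ⟨fun _ _ => 1, fun _ => 0, ?_, ?_, ?_⟩
      · intro i j; simp; linarith
      · intro i; simp; linarith
      · intro x i; simp
    have n4 := (m1.sum m2 (by linarith)).comp_aff n3 (by simp; omega)
    rw [k3] at n4
    refine ⟨fun x => φ x + ψ x, by push_cast; exact n4, fun x hx => ?_⟩
    have := e1 x hx
    have := e2 x hx
    rw [map_add]; push_cast
    rw [add_div, show φ x + ψ x - (MvPolynomial.eval x p + MvPolynomial.eval x q) =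
      (φ x - MvPolynomial.eval x p) + (ψ x - MvPolynomial.eval x q) by ring]
    exact (abs_add_le _ _).trans (add_le_add (e1 x hx) (e2 x hx))
  | mul_X p i hp =>
    obtain ⟨C1, c1, b1, h1⟩ := hp
    have c1' : (2 : ℝ) ≤ C1 := by exact_mod_cast c1
    obtain ⟨C2, c2, h2⟩ := mul_net (2 * C1 + R) (by linarith)
    have c2' : (2 : ℝ) ≤ C2 := by exact_mod_cast c2
    obtain ⟨C3, c3⟩ := exists_nat_ge R
    have c3' : (1 : ℝ) ≤ C3 := by linarith
    have c3'' : 1 ≤ C3 := by exact_mod_cast c3'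
    have c13 : C1 ≤ C1 * C3 := by nlinarith
    refine ⟨C1 * C3 + C2 + 3, by omega, fun x hx => ?_, fun k => ?_⟩
    · rw [map_mul, MvPolynomial.eval_X, abs_mul]; push_cast
      have : |MvPolynomial.eval x p| * |x i| ≤ C1 * C3 :=
        mul_le_mul (b1 x hx) ((hx i).trans c3) (abs_nonneg _) (by positivity)
      linarith
    obtain ⟨φ, n1, e1⟩ := h1 k
    obtain ⟨ψ, n2, e2⟩ := h2 k
    set C := C1 * C3 + C2 + 3 with hCdef
    have hC1 : (C1 : ℝ) ≤ C := by exact_mod_cast (by omega : C1 ≤ C)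
    have hC2 : (C2 : ℝ) ≤ C := by exact_mod_cast (by omega : C2 ≤ C)
    have nn : Net (C1 : ℝ) (C1 + 2) (C1 * (k + 1)) (fun (x : σ → ℝ) => Sum.elim (fun _ : Unit => φ x) (fun _ : Unit => x i)) := by
      refine n1.sum (W2 := 2) ?_ (by linarith)
      have : Net (C1 : ℝ) 2 0 (fun (x : σ → ℝ) (_ : Unit) => x i) := Lay.sel (by linarith) (fun _ => i)
      exact this.pad (by linarith) (by simp) (by omega)
    have nn2 := (nn.reindex (![Sum.inl (), Sum.inr ()] : Fin 2 → Unit ⊕ Unit)).mono hC1 (by omega : C1 + 2 ≤ C)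
    have n3 := nn2.comp (by simp; omega) (n2.mono hC2 (by omega : C2 ≤ C))
    have hlen : C1 * (k + 1) + 1 + C2 * (k + 1) ≤ C * (k + 1) := by
      rw [hCdef]; nlinarith
    refine ⟨_, n3.pad (by linarith) (by simp; omega) hlen, fun x hx => ?_⟩
    have hk : (1 : ℝ) ≤ 4 ^ k := one_le_pow₀ (by norm_num)
    have e1x := e1 x hx
    have b1x := b1 x hx
    have hφ : |φ x| ≤ 2 * C1 := by
      have : (C1 : ℝ) / 4 ^ k ≤ C1 := div_le_self (by positivity) hk
      have := abs_sub_abs_le_abs_sub (φ x) (MvPolynomial.eval x p)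
      linarith
    have e2x := e2 ![φ x, x i] (by
      intro j
      fin_cases j
      · simp; linarith
      · have := hx i
        simp; linarith)
    have ev : (fun m : Fin 2 => Sum.elim (fun _ : Unit => φ x) (fun _ : Unit => x i) (![Sum.inl (), Sum.inr ()] m)) = ![φ x, x i] := by
      funext j; fin_cases j <;> rfl
    rw [ev, map_mul, MvPolynomial.eval_X]
    simp only [Matrix.cons_val_zero, Matrix.cons_val_one] at e2x
    have t : |ψ ![φ x, x i] - MvPolynomial.eval x p * x i| ≤ C2 / 4 ^ k + C1 / 4 ^ k * C3 := by
      rw [show ψ ![φ x, x i] - MvPolynomial.eval x p * x i = (ψ ![φ x, x i] - φ x * x i) +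
        (φ x - MvPolynomial.eval x p) * x i by ring]
      refine (abs_add_le _ _).trans (add_le_add e2x ?_)
      rw [abs_mul]
      exact mul_le_mul e1x ((hx i).trans c3) (abs_nonneg _) (by positivity)
    refine t.trans ?_
    rw [hCdef]
    push_cast
    rw [show (C2 : ℝ) / 4 ^ k + C1 / 4 ^ k * C3 = (C1 * C3 + C2) / 4 ^ k by ring]
    apply div_le_div_of_nonneg_right _ (by positivity)
    linarith

/-- functions computed exactly by some fixed network -/
def EX {ι : Type} [Fintype ι] (f : (ι → ℝ) → ℝ) : Prop :=
  ∃ C : ℕ, 2 ≤ C ∧ Net C C C (fun x (_ : Unit) => f x)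

theorem EX.mm {ι : Type} [Fintype ι] {f g : (ι → ℝ) → ℝ} (hf : EX f) (hg : EX g) (s : ℝ)
    (hs : |s| = 1) : EX (fun x => f x + s * rl (s * (g x - f x))) := by
  obtain ⟨C1, c1, h1⟩ := hf
  obtain ⟨C2, c2, h2⟩ := hg
  have c1' : (2 : ℝ) ≤ C1 := by exact_mod_cast c1
  have c2' : (2 : ℝ) ≤ C2 := by exact_mod_cast c2
  have m1 := (h1.pad (by linarith) (by simpa using c1) (by omega : C1 ≤ C1 + C2)).mono
      (show (C1 : ℝ) ≤ C1 + C2 + 2 by linarith) le_rfl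
  have m2 := (h2.pad (by linarith) (by simpa using c2) (by omega : C2 ≤ C1 + C2)).mono
      (show (C2 : ℝ) ≤ C1 + C2 + 2 by linarith) le_rfl
  have n1 := (m1.sum m2 (by linarith)).mono le_rfl (by omega : C1 + C2 ≤ C1 + C2 + 2)
  have n2 : Net ((C1 : ℝ) + C2 + 2) (C1 + C2 + 2) 1 (fun (x : Unit ⊕ Unit → ℝ) (_ : Unit) =>
      x (Sum.inl ()) + s * rl (s * (x (Sum.inr ()) - x (Sum.inl ())))) := by
    refine ⟨Fin 3, inferInstance, fun x => ![x (Sum.inl ()), - x (Sum.inl ()),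
      s * (x (Sum.inr ()) - x (Sum.inl ()))], fun y _ => y 0 - y 1 + s * y 2, ?_, ?_, ?_, ?_⟩
    · refine ⟨![Sum.elim (fun _ => 1) (fun _ => 0), Sum.elim (fun _ => -1) (fun _ => 0),
        Sum.elim (fun _ => -s) (fun _ => s)], fun _ => 0, ?_, ?_, ?_⟩
      · intro i j
        fin_cases i <;> rcases j with j | j <;> simp [hs] <;> linarith
      · intro i; simp; linarith
      · intro x i
        fin_cases i <;> simp; ring
    · simp; omega
    · refine ⟨fun _ => ![1, -1, s], fun _ => 0, ?_, ?_, ?_⟩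
      · intro i j
        fin_cases j <;> simp [hs] <;> linarith
      · intro i; simp; linarith
      · intro x i
        simp [Fin.sum_univ_three]; ring
    · intro x
      funext _
      simp only [Matrix.cons_val_zero, Matrix.cons_val_one, Matrix.cons_val]
      rw [rl_sub]
  refine ⟨C1 + C2 + 2, by omega, ?_⟩
  have := n1.comp (by simp; omega) n2
  push_cast
  exact this

theorem EX.max {ι : Type} [Fintype ι] {f g : (ι → ℝ) → ℝ} (hf : EX f) (hg : EX g) :
    EX (fun x => max (f x) (g x)) := by
  have := hf.mm hg 1 (by simp)
  convert this using 2 with x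
  unfold rl
  rcases le_total (f x) (g x) with h | h
  · rw [max_eq_right h, max_eq_left (by linarith)]; ring
  · rw [max_eq_left h, max_eq_right (by linarith)]; ring

theorem EX.min {ι : Type} [Fintype ι] {f g : (ι → ℝ) → ℝ} (hf : EX f) (hg : EX g) :
    EX (fun x => min (f x) (g x)) := by
  have := hf.mm hg (-1) (by simp)
  convert this using 2 with x
  unfold rl
  rcases le_total (f x) (g x) with h | h
  · rw [min_eq_left h, max_eq_right (by linarith)]; ring
  · rw [min_eq_right h, max_eq_left (by linarith)]; ring

theorem EX.sup {ι α : Type} [Fintype ι] (s : Finset α) (hs : s.Nonempty) (f : α → (ι → ℝ) → ℝ)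
    (h : ∀ a, EX (f a)) : EX (fun x => s.sup' hs (fun a => f a x)) := by
  induction hs using Finset.Nonempty.cons_induction with
  | singleton a => simpa using h a
  | cons a s ha hs ih =>
    have := (h a).max ih
    convert this using 2 with x
    rw [Finset.sup'_cons hs]

theorem EX.inf {ι α : Type} [Fintype ι] (s : Finset α) (hs : s.Nonempty) (f : α → (ι → ℝ) → ℝ)
    (h : ∀ a, EX (f a)) : EX (fun x => s.inf' hs (fun a => f a x)) := by
  induction hs using Finset.Nonempty.cons_induction with
  | singleton a => simpa using h a
  | cons a s ha hs ih =>
    have := (h a).min ih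
    convert this using 2 with x
    rw [Finset.inf'_cons hs]

theorem EX.coord {ι : Type} [Fintype ι] (i : ι) : EX (fun x : ι → ℝ => x i) := by
  refine ⟨2, le_rfl, ?_⟩
  have : Net ((2 : ℕ) : ℝ) 2 0 (fun (x : ι → ℝ) (_ : Unit) => x i) := Lay.sel (by norm_num) (fun _ => i)
  exact this.pad (by norm_num) (by simp) (by norm_num)

theorem median_net (d : ℕ) : ∃ med : (Fin (2 * d + 1) → ℝ) → ℝ, EX med ∧
    ∀ (v : Fin (2 * d + 1) → ℝ) (y ε : ℝ) (G : Finset (Fin (2 * d + 1))), d + 1 ≤ G.card →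
      (∀ j ∈ G, |v j - y| ≤ ε) → |med v - y| ≤ ε := by
  classical
  let T := {S : Finset (Fin (2 * d + 1)) // S.card = d + 1}
  have hne : ∀ S : T, S.1.Nonempty := fun S => by
    rw [← Finset.card_pos, S.2]; omega
  have hT : (Finset.univ : Finset T).Nonempty := by
    obtain ⟨S, hS⟩ := Finset.exists_subset_card_eq (s := (Finset.univ : Finset (Fin (2 * d + 1))))
      (n := d + 1) (by simp; omega)
    exact ⟨⟨S, hS.2⟩, Finset.mem_univ _⟩
  refine ⟨fun v => Finset.univ.sup' hT (fun S : T => S.1.inf' (hne S) (fun j => v j)), ?_, ?_⟩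
  · exact EX.sup (α := T) _ hT _ (fun S => EX.inf S.1 (hne S) _ (fun j => EX.coord j))
  · intro v y ε G hG hv
    rw [abs_le]
    constructor
    · obtain ⟨S, hS, hSc⟩ := Finset.exists_subset_card_eq hG
      have h1 : y - ε ≤ S.inf' (hne ⟨S, hSc⟩) (fun j => v j) := by
        apply Finset.le_inf'
        intro j hj
        have := abs_le.1 (hv j (hS hj))
        linarith
      have h2 := Finset.le_sup' (fun S : T => S.1.inf' (hne S) (fun j => v j)) (Finset.mem_univ ⟨S, hSc⟩)
      dsimp only at h2
      linarith
    · suffices h : Finset.univ.sup' hT (fun S : T => S.1.inf' (hne S) (fun j => v j)) ≤ y + ε by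
        linarith
      apply Finset.sup'_le
      rintro ⟨S, hS⟩ -
      have : ¬ Disjoint S G := by
        intro hd
        have h1 := Finset.card_union_of_disjoint hd
        have h2 := Finset.card_le_univ (S ∪ G)
        rw [Fintype.card_fin] at h2
        omega
      obtain ⟨j, hj1, hj2⟩ := Finset.not_disjoint_iff.1 this
      have h2 := Finset.inf'_le (fun j => v j) hj1
      have := abs_le.1 (hv j hj2)
      dsimp only at h2 ⊢
      linarith

theorem clip01_one {z : ℝ} (h : 1 ≤ z) : clip01 z = 1 := by
  unfold clip01; rw [rl_of_nonneg (by linarith), rl_of_nonneg (by linarith)]; ring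

theorem clip01_zero {z : ℝ} (h : z ≤ 0) : clip01 z = 0 := by
  unfold clip01; rw [rl_of_nonpos (by linarith), rl_of_nonpos (by linarith)]; ring

theorem step_one {J e : ℕ} {x t : ℝ} (h : t ≤ x) :
    clip01 (4 ^ e * (J * x - J * t + 1 / 4 ^ e)) = 1 := by
  apply clip01_one
  have h4 : (0 : ℝ) < 4 ^ e := by positivity
  have : (4 : ℝ) ^ e * (J * x - J * t + 1 / 4 ^ e) = 4 ^ e * (J * (x - t)) + 1 := by
    field_simp
  rw [this]
  have : 0 ≤ x - t := by linarith
  have : (0 : ℝ) ≤ 4 ^ e * (J * (x - t)) := by positivity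
  linarith

theorem step_zero {J e : ℕ} (hJ : 1 ≤ J) {x t : ℝ} (h : x ≤ t - 1 / (J * 4 ^ e)) :
    clip01 (4 ^ e * (J * x - J * t + 1 / 4 ^ e)) = 0 := by
  apply clip01_zero
  have h4 : (0 : ℝ) < 4 ^ e := by positivity
  have hJ' : (0 : ℝ) < J := by exact_mod_cast hJ
  have e1 : (4 : ℝ) ^ e * (J * x - J * t + 1 / 4 ^ e) = 4 ^ e * J * (x - (t - 1 / (J * 4 ^ e))) := by
    field_simp; ring
  rw [e1]
  apply mul_nonpos_of_nonneg_of_nonpos (by positivity) (by linarith)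

theorem Net.sharp {ι κ : Type} [Fintype ι] [Fintype κ] {B : ℝ} {W L : ℕ} {f : (ι → ℝ) → κ → ℝ}
    (h : Net B W L f) (hB : 2 ≤ B) (hW : 2 * Fintype.card κ ≤ W) (e : ℕ) :
    Net B W (L + 2 * e + 2) (fun x k => clip01 (4 ^ e * f x k)) := by
  have := (h.amplify hB hW (2 * e)).clip (by linarith) hW
  simp only [pow_mul] at this
  norm_num at this
  exact this

theorem sum_ind (M c : ℕ) (hc : c < M) (f : Fin (M + 1) → ℝ)
    (h1 : ∀ k : Fin (M + 1), (k : ℕ) ≤ c → f k = 1) (h0 : ∀ k : Fin (M + 1), c < (k : ℕ) → f k = 0) :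
    ∑ k, f k = c + 1 := by
  have : ∀ k : Fin (M + 1), f k = (fun j : ℕ => if j ≤ c then (1 : ℝ) else 0) k := by
    intro k
    dsimp only
    split_ifs with h
    · exact h1 k h
    · exact h0 k (by omega)
  rw [Finset.sum_congr rfl (fun k _ => this k), Fin.sum_univ_eq_sum_range (fun j => if j ≤ c then (1 : ℝ) else 0), Finset.sum_boole]
  have : (Finset.range (M + 1)).filter (fun j => j ≤ c) = Finset.range (c + 1) := by
    ext j; simp; omega
  rw [this]; simp

theorem onehot_val {d M : ℕ} (f : Fin d → Fin (M + 1) → ℝ) (c : Fin d → Fin M)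
    (h1 : ∀ i, ∀ k : Fin (M + 1), (k : ℕ) ≤ c i → f i k = 1)
    (h0 : ∀ i, ∀ k : Fin (M + 1), (c i : ℕ) < (k : ℕ) → f i k = 0) (c' : Fin d → Fin M) :
    rl (∑ i, (f i (c' i).castSucc - f i (c' i).succ) - ((d : ℝ) - 1)) = if c' = c then 1 else 0 := by
  have key : ∀ i, f i (c' i).castSucc - f i (c' i).succ = if c' i = c i then 1 else 0 := by
    intro i
    split_ifs with h
    · rw [h1 i _ (by rw [h]; simp), h0 i _ (by rw [h]; simp)]; ring
    · have h' : (c' i : ℕ) ≠ c i := fun hh => h (Fin.ext hh)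
      rcases lt_or_gt_of_ne h' with h' | h'
      · rw [h1 i _ (by simp; omega), h1 i _ (by simp; omega)]; ring
      · rw [h0 i _ (by simp; omega), h0 i _ (by simp; omega)]; ring
  simp only [key]
  split_ifs with h
  · subst h
    simp
    rw [rl_of_nonneg (by norm_num)]
  · apply rl_of_nonpos
    rw [Finset.sum_boole]
    have : ((Finset.univ.filter (fun i => c' i = c i)).card) < d := by
      conv_rhs => rw [← Fintype.card_fin d]
      apply Finset.card_lt_univ_of_notMem (x := (Function.ne_iff.1 h).choose)
      simpa using (Function.ne_iff.1 h).choose_spec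
    have : ((Finset.univ.filter (fun i => c' i = c i)).card : ℝ) + 1 ≤ d := by exact_mod_cast this
    linarith

theorem lookup_tail {d M : ℕ} (hM : 1 ≤ M) {Q : Type} [Fintype Q] (B1 : ℝ) (hB1 : 0 ≤ B1) {B : ℝ} {W : ℕ}
    (hB : d + 2 + 2 * B1 ≤ B) (hW1 : 2 * M ^ d ≤ W) (hW2 : Fintype.card Q * M ^ d ≤ W)
    (a : Q → (Fin d → Fin M) → (Fin d → Fin M) → ℝ) (ha : ∀ q c s, |a q c s| ≤ B1) :
    ∃ φ : (Fin d × Fin (M + 1) ⊕ Fin d × Fin (M + 1) → ℝ) → Q → ℝ, Net B W 2 φ ∧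
      ∀ (w : Fin d × Fin (M + 1) ⊕ Fin d × Fin (M + 1) → ℝ) (c s : Fin d → Fin M),
      (∀ i, ∀ k : Fin (M + 1), (k : ℕ) ≤ c i → w (Sum.inl (i, k)) = 1) →
      (∀ i, ∀ k : Fin (M + 1), (c i : ℕ) < (k : ℕ) → w (Sum.inl (i, k)) = 0) →
      (∀ i, ∀ k : Fin (M + 1), (k : ℕ) ≤ s i → w (Sum.inr (i, k)) = 1) →
      (∀ i, ∀ k : Fin (M + 1), (s i : ℕ) < (k : ℕ) → w (Sum.inr (i, k)) = 0) →
      ∀ q, φ w q = a q c s := by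
  classical
  have hd0 : (0 : ℝ) ≤ d := by positivity
  let E : (Fin d × Fin (M + 1) ⊕ Fin d × Fin (M + 1) → ℝ) → (Fin d → Fin M) ⊕ (Fin d → Fin M) → ℝ :=
    fun w => Sum.elim
      (fun c => ∑ i, (w (Sum.inl (i, (c i).castSucc)) - w (Sum.inl (i, (c i).succ))) - ((d : ℝ) - 1))
      (fun c => ∑ i, (w (Sum.inr (i, (c i).castSucc)) - w (Sum.inr (i, (c i).succ))) - ((d : ℝ) - 1))
  have hE : Lay B E := by
    refine ⟨Sum.elim
      (fun c => Sum.elim (fun p => (if p.2 = (c p.1).castSucc then 1 else 0) - (if p.2 = (c p.1).succ then 1 else 0)) (fun _ => 0))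
      (fun c => Sum.elim (fun _ => 0) (fun p => (if p.2 = (c p.1).castSucc then 1 else 0) - (if p.2 = (c p.1).succ then 1 else 0))),
      fun _ => - ((d : ℝ) - 1), ?_, ?_, ?_⟩
    · rintro (c | c) (p | p) <;> simp only [Sum.elim_inl, Sum.elim_inr, abs_zero]
      · split_ifs <;> norm_num <;> linarith
      · linarith
      · linarith
      · split_ifs <;> norm_num <;> linarith
    · intro k
      rw [abs_neg, abs_le]; constructor <;> linarith
    · rintro x (c | c) <;>
      simp [E, Fintype.sum_sum_type, Fintype.sum_prod_type, sub_mul, Finset.sum_sub_distrib] <;> ring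
  let U : ((Fin d → Fin M) ⊕ (Fin d → Fin M) → ℝ) → Q × (Fin d → Fin M) → ℝ :=
    fun y p => ∑ c, (a p.1 c p.2 + B1) * y (Sum.inl c) + 2 * B1 * y (Sum.inr p.2) - 2 * B1
  have hU : Lay B U := by
    refine ⟨fun p => Sum.elim (fun c => a p.1 c p.2 + B1) (fun s => if s = p.2 then 2 * B1 else 0),
      fun _ => - (2 * B1), ?_, ?_, ?_⟩
    · rintro p (c | c) <;> simp only [Sum.elim_inl, Sum.elim_inr]
      · have := abs_le.1 (ha p.1 c p.2)
        rw [abs_le]; constructor <;> linarith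
      · split_ifs
        · rw [abs_of_nonneg (by linarith)]; linarith
        · simp; linarith
    · intro p
      rw [abs_neg, abs_of_nonneg (by linarith)]; linarith
    · intro x p
      simp [U, Fintype.sum_sum_type, sub_eq_add_neg]
  let O : (Q × (Fin d → Fin M) → ℝ) → Q → ℝ := fun y q => ∑ s, y (q, s) - B1
  have hO : Lay B O := by
    refine ⟨fun q p => if p.1 = q then 1 else 0, fun _ => - B1, ?_, ?_, ?_⟩
    · intro q p; dsimp only; split_ifs <;> simp <;> linarith
    · intro q; rw [abs_neg, abs_of_nonneg hB1]; linarith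
    · intro x q
      simp only [O, Fintype.sum_prod_type]
      rw [Finset.sum_eq_single q]
      · simp [sub_eq_add_neg]
      · intro b _ hb; simp [hb]
      · simp
  refine ⟨fun w => O (fun p => rl (U (fun z => rl (E w z)) p)), ?_, ?_⟩
  · refine ⟨Q × (Fin d → Fin M), inferInstance, fun w => U (fun z => rl (E w z)), O, ?_, ?_, hO, fun _ => rfl⟩
    · exact ⟨_, inferInstance, E, U, hE, by simp; omega, hU, fun _ => rfl⟩
    · simpa using hW2
  · intro w c s h1 h2 h3 h4 q
    have ec : ∀ c', rl (E w (Sum.inl c')) = if c' = c then 1 else 0 := by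
      intro c'
      simp only [E, Sum.elim_inl]
      exact onehot_val (fun i k => w (Sum.inl (i, k))) c h1 h2 c'
    have es : ∀ c', rl (E w (Sum.inr c')) = if c' = s then 1 else 0 := by
      intro c'
      simp only [E, Sum.elim_inr]
      exact onehot_val (fun i k => w (Sum.inr (i, k))) s h3 h4 c'
    have eu : ∀ s', rl (U (fun z => rl (E w z)) (q, s')) = if s' = s then a q c s + B1 else 0 := by
      intro s'
      simp only [U, ec, es]
      have := abs_le.1 (ha q c s')
      split_ifs with h
      · subst h
        simp
        exact rl_of_nonneg (by linarith)
      · simp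
        exact rl_of_nonpos (by linarith)
    simp only [O, eu]
    simp

theorem lookup_net {d : ℕ} (hd : 1 ≤ d) {J : ℕ} (hJ : 1 ≤ J) (Q : Type) [Fintype Q] (B1 : ℝ) (hB1 : 0 ≤ B1) :
    ∃ C : ℕ, 2 ≤ C ∧ ∀ e : ℕ, ∀ a : Q → (Fin d → Fin (2 ^ e)) → (Fin d → Fin (2 ^ e)) → ℝ,
      (∀ q c s, |a q c s| ≤ B1) →
      ∃ φ : (Fin d → ℝ) → Q → ℝ, Net C (C * (2 ^ e) ^ d) (C * (e + 1)) φ ∧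
        ∀ (τ : Fin d → ℝ) (c s : Fin d → Fin (2 ^ e)),
          (∀ i, (((c i : ℕ) : ℝ) * 2 ^ e + ((s i : ℕ) : ℝ)) / 4 ^ e ≤ τ i ∧
            τ i ≤ (((c i : ℕ) : ℝ) * 2 ^ e + ((s i : ℕ) : ℝ) + 1) / 4 ^ e - 1 / (J * 4 ^ e)) →
          ∀ q, φ τ q = a q c s := by
  classical
  refine ⟨32 * d + 2 * Fintype.card Q + J + 10 + ⌈2 * B1⌉₊, by omega, ?_⟩
  intro e
  set C : ℕ := 32 * d + 2 * Fintype.card Q + J + 10 + ⌈2 * B1⌉₊ with hC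
  have hCr : (32 * d + J + 10 + 2 * B1 : ℝ) ≤ C := by
    have h1 := Nat.le_ceil (2 * B1)
    have h2 : (0 : ℝ) ≤ Fintype.card Q := by positivity
    rw [hC]; push_cast; linarith
  have hd1 : (1 : ℝ) ≤ d := by exact_mod_cast hd
  have hJ1 : (1 : ℝ) ≤ J := by exact_mod_cast hJ
  set M : ℕ := 2 ^ e with hM
  intro a ha
  have hM1 : 1 ≤ M := Nat.one_le_two_pow
  have hMr : (M : ℝ) = 2 ^ e := by rw [hM]; push_cast; rfl
  have hM1r : (1 : ℝ) ≤ M := by exact_mod_cast hM1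
  have h4M : (4 : ℝ) ^ e = M * M := by
    rw [hMr, ← mul_pow]; norm_num
  have hMd : M ≤ M ^ d := Nat.le_self_pow (by omega) M
  have hM4 : (M : ℝ) ≤ 4 ^ e := by rw [h4M]; nlinarith
  have h41 : (1 : ℝ) ≤ 4 ^ e := by linarith
  -- layer one
  let y1 : (Fin d → ℝ) → Fin d × Fin (M + 1) → ℝ :=
    fun τ p => J * τ p.1 - J * (((p.2 : ℕ) : ℝ) / M) + 1 / 4 ^ e
  have hk : ∀ k : Fin (M + 1), ((k : ℕ) : ℝ) ≤ M := by
    intro k; exact_mod_cast Nat.lt_succ_iff.1 k.2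
  have h4i : (1 : ℝ) / 4 ^ e ≤ 1 := by rw [div_le_one (by positivity)]; exact h41
  have h4p : (0 : ℝ) < 1 / 4 ^ e := by positivity
  have hy1 : Lay (C : ℝ) y1 := by
    refine ⟨fun p i => if i = p.1 then J else 0, fun p => - (J * (((p.2 : ℕ) : ℝ) / M)) + 1 / 4 ^ e, ?_, ?_, ?_⟩
    · intro p i; dsimp only; split_ifs
      · rw [abs_of_nonneg (by positivity)]; linarith
      · simp
    · intro p
      have h1 : ((p.2 : ℕ) : ℝ) / M ≤ 1 := by rw [div_le_one (by positivity)]; exact hk _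
      have h0 : 0 ≤ ((p.2 : ℕ) : ℝ) / M := by positivity
      rw [abs_le]; constructor <;> nlinarith
    · intro x p
      simp [y1]; ring
  let V := 8 * d * (M + 1)
  have hcard : Fintype.card (Fin d × Fin (M + 1)) = d * (M + 1) := by simp
  have hdM : d ≤ d * (M + 1) := Nat.le_mul_of_pos_right _ (by omega)
  have hC2 : (2 : ℝ) ≤ C := by linarith
  have hC1 : (1 : ℝ) ≤ C := by linarith
  have hC0 : (0 : ℝ) ≤ C := by linarith
  let S : (Fin d → ℝ) → Fin d × Fin (M + 1) → ℝ := fun τ p => clip01 (4 ^ e * y1 τ p)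
  have hS : Net (C : ℝ) (4 * (d * (M + 1))) (2 * e + 2) S := by
    have h0 : Net (C : ℝ) (4 * (d * (M + 1))) 0 y1 := hy1
    have := h0.sharp hC2 (by rw [hcard]; omega) e
    simpa using this
  have hid : Net (C : ℝ) (4 * (d * (M + 1))) (2 * e + 2) (fun τ : Fin d → ℝ => fun i => τ i) := by
    have h0 : Net (C : ℝ) (4 * (d * (M + 1))) 0 (fun τ : Fin d → ℝ => fun i => τ i) := Lay.sel hC1 id
    exact h0.pad hC1 (by simp; omega) (by omega)
  have hz : Net (C : ℝ) (8 * (d * (M + 1))) (2 * e + 2) (fun τ => Sum.elim (fun i => τ i) (S τ)) :=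
    (Net.sum hid hS hC0).mono le_rfl (by omega)
  let y2 : (Fin d ⊕ Fin d × Fin (M + 1) → ℝ) → Fin d × Fin (M + 1) → ℝ :=
    fun z p => J * (z (Sum.inl p.1) - ((∑ k, z (Sum.inr (p.1, k))) - 1) / M) - J * (((p.2 : ℕ) : ℝ) / 4 ^ e) + 1 / 4 ^ e
  have hMi : (1 : ℝ) / M ≤ 1 := by rw [div_le_one (by positivity)]; exact hM1r
  have hMp : (0 : ℝ) < 1 / M := by positivity
  have hy2 : Lay (C : ℝ) y2 := by
    refine ⟨fun p => Sum.elim (fun i => if i = p.1 then (J : ℝ) else 0) (fun r => if r.1 = p.1 then - (J * (1 / M)) else 0),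
      fun p => J * (1 / M) - J * (((p.2 : ℕ) : ℝ) / 4 ^ e) + 1 / 4 ^ e, ?_, ?_, ?_⟩
    · rintro p (i | r) <;> simp only [Sum.elim_inl, Sum.elim_inr] <;> split_ifs
      · rw [abs_of_nonneg (by positivity)]; linarith
      · simp
      · rw [abs_neg, abs_of_nonneg (by positivity)]; nlinarith
      · simp
    · intro p
      have h1 : ((p.2 : ℕ) : ℝ) / 4 ^ e ≤ 1 := by
        rw [div_le_one (by positivity)]; exact (hk _).trans hM4
      have h0 : 0 ≤ ((p.2 : ℕ) : ℝ) / 4 ^ e := by positivity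
      rw [abs_le]; constructor <;> nlinarith
    · intro x p
      have : ∑ r : Fin d × Fin (M + 1), (if r.1 = p.1 then - ((J : ℝ) * (1 / M)) else 0) * x (Sum.inr r)
          = - (J * (1 / M)) * ∑ k, x (Sum.inr (p.1, k)) := by
        rw [Fintype.sum_prod_type, Finset.sum_eq_single p.1]
        · rw [Finset.mul_sum]; simp
        · intro b _ hb; simp [hb]
        · simp
      rw [Fintype.sum_sum_type]
      simp only [Sum.elim_inl, Sum.elim_inr, this]
      simp [y2]; ring
  have hS2 : Net (C : ℝ) (8 * (d * (M + 1))) (4 * e + 5)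
      (fun τ p => clip01 (4 ^ e * y2 (Sum.elim (fun i => τ i) (S τ)) p)) := by
    have h1 := hz.comp_aff hy2 (by simp; omega)
    have h2 := h1.sharp hC2 (by rw [hcard]; omega) e
    have : 2 * e + 2 + 1 + 2 * e + 2 = 4 * e + 5 := by ring
    rw [this] at h2
    exact h2
  have hS1 : Net (C : ℝ) (8 * (d * (M + 1))) (4 * e + 5) S :=
    (hS.mono le_rfl (by omega)).pad hC1 (by rw [hcard]; omega) (by omega)
  have hSS := Net.sum hS1 hS2 hC0
  have hMd2 : d * (M + 1) ≤ 2 * (d * M ^ d) := by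
    have : M + 1 ≤ 2 * M ^ d := by omega
    calc d * (M + 1) ≤ d * (2 * M ^ d) := Nat.mul_le_mul_left _ this
      _ = _ := by ring
  have hW : 32 * (d * M ^ d) + 2 * (Fintype.card Q * M ^ d) + 10 * M ^ d ≤ C * M ^ d := by
    rw [hC]
    ring_nf
    have : 0 ≤ M ^ d * J + M ^ d * ⌈2 * B1⌉₊ := Nat.zero_le _
    have e1 : M ^ d * ⌈2 * B1⌉₊ = M ^ d * ⌈B1 * 2⌉₊ := by rw [mul_comm B1]
    nlinarith [Nat.zero_le (M ^ d * J), Nat.zero_le (M ^ d * ⌈B1 * 2⌉₊)]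
  obtain ⟨φ, hφ, hφ2⟩ := lookup_tail (d := d) (M := M) hM1 (Q := Q) B1 hB1 (B := C) (W := C * M ^ d)
    (by linarith) (by omega) (by omega) a ha
  have hfin := Net.comp (hSS.mono (W' := C * M ^ d) le_rfl (by omega)) (by simp; omega) hφ
  refine ⟨_, hfin.pad hC1 ?_ ?_, ?_⟩
  · have : Fintype.card Q ≤ Fintype.card Q * M ^ d := Nat.le_mul_of_pos_right _ (by positivity)
    omega
  · have : 10 ≤ C := by omega
    nlinarith
  · intro τ c s h q
    have hSa : ∀ i, ∀ k : Fin (M + 1), (k : ℕ) ≤ c i → S τ (i, k) = 1 := by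
      intro i k hk
      apply step_one
      dsimp only
      refine le_trans ?_ (h i).1
      rw [h4M, ← hMr, div_le_div_iff₀ (by positivity) (by positivity)]
      have : ((k : ℕ) : ℝ) ≤ (c i : ℕ) := by exact_mod_cast hk
      have h2 : (0 : ℝ) ≤ (s i : ℕ) := by positivity
      have h3 : ((k : ℕ) : ℝ) * (M * M) ≤ (c i : ℕ) * (M * M) := by gcongr
      nlinarith
    have hSb : ∀ i, ∀ k : Fin (M + 1), (c i : ℕ) < (k : ℕ) → S τ (i, k) = 0 := by
      intro i k hk
      apply step_zero hJ
      dsimp only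
      refine le_trans (h i).2 ?_
      apply sub_le_sub_right
      rw [h4M, ← hMr, div_le_div_iff₀ (by positivity) (by positivity)]
      have : ((c i : ℕ) : ℝ) + 1 ≤ (k : ℕ) := by exact_mod_cast hk
      have h2 : ((s i : ℕ) : ℝ) + 1 ≤ M := by exact_mod_cast (s i).2
      have h3 : (((c i : ℕ) : ℝ) + 1) * (M * M) ≤ (k : ℕ) * (M * M) := by gcongr
      nlinarith
    have hsum : ∀ i, ∑ k, S τ (i, k) = ((c i : ℕ) : ℝ) + 1 := by
      intro i
      exact sum_ind M (c i) (c i).2 (fun k => S τ (i, k)) (hSa i) (hSb i)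
    have hx : ∀ i, ((s i : ℕ) : ℝ) / 4 ^ e ≤ τ i - ((c i : ℕ) + 1 - 1 : ℝ) / M ∧
        τ i - ((c i : ℕ) + 1 - 1 : ℝ) / M ≤ (((s i : ℕ) : ℝ) + 1) / 4 ^ e - 1 / (J * 4 ^ e) := by
      intro i
      have e1 : ((c i : ℕ) + 1 - 1 : ℝ) / M = ((c i : ℕ) : ℝ) * 2 ^ e / 4 ^ e := by
        rw [h4M, ← hMr]; field_simp; ring
      rw [e1]
      have h1 := h i
      rw [add_assoc, add_div, add_div _ _ ((4 : ℝ) ^ e)] at h1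
      constructor <;> linarith [h1.1, h1.2]
    apply hφ2
    · intro i k hk; exact hSa i k hk
    · intro i k hk; exact hSb i k hk
    · intro i k hk
      simp only [Sum.elim_inr]
      simp only [y2, Sum.elim_inl, Sum.elim_inr, hsum]
      apply step_one
      refine le_trans ?_ (hx i).1
      have : ((k : ℕ) : ℝ) ≤ (s i : ℕ) := by exact_mod_cast hk
      gcongr
    · intro i k hk
      simp only [Sum.elim_inr]
      simp only [y2, Sum.elim_inl, Sum.elim_inr, hsum]
      apply step_zero hJ
      refine le_trans (hx i).2 ?_
      have : ((s i : ℕ) : ℝ) + 1 ≤ (k : ℕ) := by exact_mod_cast hk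
      gcongr

/-- iterated partial derivatives along a list of directions -/
def Dl {d : ℕ} (l : List (Fin d)) (g : (Fin d → ℝ) → ℝ) : (Fin d → ℝ) → ℝ := l.foldr pder g

theorem Dl_cons {d : ℕ} (i : Fin d) (l : List (Fin d)) (g : (Fin d → ℝ) → ℝ) :
    Dl (i :: l) g = pder i (Dl l g) := rfl

theorem contDiff_pder {d n : ℕ} (i : Fin d) {g : (Fin d → ℝ) → ℝ}
    (hg : ContDiff ℝ ((n + 1 : ℕ) : ℕ∞) g) : ContDiff ℝ ((n : ℕ) : ℕ∞) (pder i g) := by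
  have h : ContDiff ℝ ((n : ℕ) : ℕ∞) (fderiv ℝ g) := by
    apply hg.fderiv_right
    norm_cast
  exact h.clm_apply contDiff_const

theorem contDiff_Dl {d : ℕ} (l : List (Fin d)) {g : (Fin d → ℝ) → ℝ} : ∀ {n : ℕ},
    ContDiff ℝ ((n + l.length : ℕ) : ℕ∞) g → ContDiff ℝ ((n : ℕ) : ℕ∞) (Dl l g) := by
  induction l with
  | nil => intro n h; simpa [Dl] using h
  | cons i l ih =>
    intro n h
    rw [Dl_cons]
    apply contDiff_pder
    apply ih
    have : n + (i :: l).length = n + 1 + l.length := by simp; omega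
    rw [this] at h
    exact h

theorem pder_comm {d : ℕ} (i j : Fin d) {g : (Fin d → ℝ) → ℝ}
    (hg : ContDiff ℝ ((2 : ℕ) : ℕ∞) g) : pder i (pder j g) = pder j (pder i g) := by
  have key : ∀ i j : Fin d, ∀ x, pder i (pder j g) x =
      fderiv ℝ (fderiv ℝ g) x (Pi.single i 1) (Pi.single j 1) := by
    intro i j x
    have h1 : DifferentiableAt ℝ (fderiv ℝ g) x := by
      have h : ContDiff ℝ ((1 : ℕ) : ℕ∞) (fderiv ℝ g) := by
        apply hg.fderiv_right
        norm_cast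
      exact (h.differentiable (by simp)).differentiableAt
    change fderiv ℝ (fun x => fderiv ℝ g x (Pi.single j 1)) x (Pi.single i 1) = _
    rw [fderiv_clm_apply h1 (differentiableAt_const _)]
    simp
  funext x
  rw [key, key]
  have := (hg.contDiffAt (x := x)).isSymmSndFDerivAt (by simp)
  exact this _ _

theorem Dl_perm {d : ℕ} {l l' : List (Fin d)} (h : l.Perm l') {g : (Fin d → ℝ) → ℝ}
    (hg : ContDiff ℝ ((l.length : ℕ) : ℕ∞) g) : Dl l g = Dl l' g := by
  induction h with
  | nil => rfl
  | cons i h ih =>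
    rw [Dl_cons, Dl_cons, ih]
    apply hg.of_le
    norm_cast
    simp
  | swap i j l =>
    simp only [Dl_cons]
    apply pder_comm
    apply contDiff_Dl
    have : 2 + l.length = (j :: i :: l).length := by simp; omega
    rw [this]; exact hg
  | trans h1 h2 ih1 ih2 =>
    rw [ih1 hg, ih2]
    rw [← h1.length_eq]; exact hg

theorem pderm_eq {d : ℕ} (α : Fin d → ℕ) (g : (Fin d → ℝ) → ℝ) :
    pderm α g = Dl ((List.finRange d).flatMap (fun i => List.replicate (α i) i)) g := by
  unfold pderm Dl
  induction List.finRange d with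
  | nil => rfl
  | cons i L ih =>
    rw [List.flatMap_cons, List.foldr_append, List.foldr_cons, ih]
    generalize (List.foldr pder g (List.flatMap (fun i => List.replicate (α i) i) L)) = F
    induction α i with
    | zero => rfl
    | succ n ihn => rw [Function.iterate_succ_apply', ihn, List.replicate_succ, List.foldr_cons]

theorem Dl_eq_pderm {d : ℕ} (l : List (Fin d)) {g : (Fin d → ℝ) → ℝ}
    (hg : ContDiff ℝ ((l.length : ℕ) : ℕ∞) g) : Dl l g = pderm (fun i => l.count i) g := by
  rw [pderm_eq]
  apply Dl_perm _ hg
  rw [List.perm_iff_count]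
  intro i
  rw [List.count_flatMap]
  have : (List.count i ∘ fun i => List.replicate (List.count i l) i) =
      fun j => if j = i then List.count i l else 0 := by
    funext j
    simp only [Function.comp, List.count_replicate]
    by_cases h : j = i
    · subst h; simp
    · simp [h]
  rw [this, ← Fin.sum_univ_def]
  simp

theorem sum_count {d : ℕ} (l : List (Fin d)) : ∑ i, l.count i = l.length := by
  induction l with
  | nil => simp
  | cons a l ih =>
    simp only [List.count_cons, Finset.sum_add_distrib, ih, List.length_cons]
    simp

theorem taylor1 (E : ℝ) (k : ℕ) : ∀ (φ : ℕ → ℝ → ℝ),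
    (∀ j < k, ∀ s, HasDerivAt (φ j) (φ (j + 1) s) s) →
    (∀ s ∈ Set.Icc (0 : ℝ) 1, |φ k s - φ k 0| ≤ E) →
    ∀ s ∈ Set.Icc (0 : ℝ) 1, |φ 0 s - ∑ j ∈ Finset.range (k + 1), φ j 0 * (s ^ j / (j.factorial : ℝ))| ≤ E := by
  induction k with
  | zero =>
    intro φ _ h s hs
    simpa using h s hs
  | succ k ih =>
    intro φ h1 h2 s hs
    have h3 := ih (fun j => φ (j + 1)) (fun j hj s => h1 (j + 1) (by omega) s) h2
    have hE : 0 ≤ E := le_trans (abs_nonneg _) (h2 0 (by simp))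
    have hder : ∀ t, HasDerivAt (fun s => φ 0 s - ∑ j ∈ Finset.range (k + 1 + 1), φ j 0 * (s ^ j / (j.factorial : ℝ)))
        (φ 1 t - ∑ j ∈ Finset.range (k + 1), φ (j + 1) 0 * (t ^ j / (j.factorial : ℝ))) t := by
      intro t
      apply (h1 0 (by omega) t).sub
      have e1 : (∑ j ∈ Finset.range (k + 1), φ (j + 1) 0 * (t ^ j / (j.factorial : ℝ))) =
          ∑ j ∈ Finset.range (k + 1 + 1), φ j 0 * ((j : ℝ) * t ^ (j - 1) / (j.factorial : ℝ)) := by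
        rw [Finset.sum_range_succ' _ (k + 1)]
        simp only [Nat.cast_zero, zero_mul, zero_div, mul_zero, add_zero]
        apply Finset.sum_congr rfl
        intro j _
        rw [Nat.factorial_succ]
        push_cast
        have : (j.factorial : ℝ) ≠ 0 := by positivity
        field_simp
        try simp
      rw [e1]
      apply HasDerivAt.fun_sum
      intro j _
      exact ((hasDerivAt_pow j t).div_const _).const_mul _
    have := (convex_Icc (0 : ℝ) 1).norm_image_sub_le_of_norm_hasDerivWithin_le (C := E)
      (fun t ht => (hder t).hasDerivWithinAt) (fun t ht => h3 t ht)
      (show (0 : ℝ) ∈ Set.Icc (0 : ℝ) 1 by simp) hs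
    have e0 : φ 0 0 - ∑ j ∈ Finset.range (k + 1 + 1), φ j 0 * ((0 : ℝ) ^ j / (j.factorial : ℝ)) = 0 := by
      rw [Finset.sum_range_succ' _ (k + 1)]
      simp
    rw [e0, sub_zero, sub_zero, Real.norm_eq_abs, Real.norm_eq_abs, abs_of_nonneg hs.1] at this
    refine this.trans ?_
    nlinarith [hs.2]

theorem hasDerivAt_line {d : ℕ} {f : (Fin d → ℝ) → ℝ} (hf : ContDiff ℝ ((1 : ℕ) : ℕ∞) f) (y h : Fin d → ℝ) (s : ℝ) :
    HasDerivAt (fun s : ℝ => f (y + s • h)) (∑ i, h i * pder i f (y + s • h)) s := by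
  have h1 : HasFDerivAt f (fderiv ℝ f (y + s • h)) (y + s • h) :=
    ((hf.differentiable (by simp)).differentiableAt).hasFDerivAt
  have h2 : HasDerivAt (fun s : ℝ => y + s • h) h s := by
    have := ((hasDerivAt_id s).smul_const h).const_add y
    simpa using this
  have h3 := h1.comp_hasDerivAt s h2
  have e : ∀ T : (Fin d → ℝ) →L[ℝ] ℝ, T h = ∑ i, h i * T (Pi.single i 1) := by
    intro T
    conv_lhs => rw [pi_eq_sum_univ' h]
    rw [map_sum]
    simp
  rw [e] at h3
  exact h3

theorem taylor_chain {d k : ℕ} {g : (Fin d → ℝ) → ℝ} (hg : ContDiff ℝ ((k : ℕ) : ℕ∞) g) (y h : Fin d → ℝ)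
    (j : ℕ) (hj : j < k) (s : ℝ) :
    HasDerivAt (fun s : ℝ => ∑ γ : Fin j → Fin d, (∏ l, h (γ l)) * Dl (List.ofFn γ) g (y + s • h))
      (∑ γ : Fin (j + 1) → Fin d, (∏ l, h (γ l)) * Dl (List.ofFn γ) g (y + s • h)) s := by
  have e : (∑ γ : Fin (j + 1) → Fin d, (∏ l, h (γ l)) * Dl (List.ofFn γ) g (y + s • h)) =
      ∑ γ : Fin j → Fin d, (∏ l, h (γ l)) * ∑ i, h i * pder i (Dl (List.ofFn γ) g) (y + s • h) := by
    rw [← (Fin.consEquiv (fun _ => Fin d)).sum_comp, Fintype.sum_prod_type, Finset.sum_comm]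
    apply Finset.sum_congr rfl
    intro γ _
    rw [Finset.mul_sum]
    apply Finset.sum_congr rfl
    intro i _
    rw [Fin.prod_univ_succ]
    simp only [Fin.consEquiv, Equiv.coe_fn_mk, Fin.cons_zero, Fin.cons_succ]
    rw [List.ofFn_succ]
    simp only [Fin.cons_zero, Fin.cons_succ, Dl_cons]
    ring
  rw [e]
  apply HasDerivAt.fun_sum
  intro γ _
  apply HasDerivAt.const_mul
  apply hasDerivAt_line
  apply contDiff_Dl
  apply hg.of_le
  norm_cast
  simp; omega

theorem cube_line {d : ℕ} {A : ℝ} {x y : Fin d → ℝ} (hx : x ∈ cube A d) (hy : y ∈ cube A d) {s : ℝ}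
    (hs : s ∈ Set.Icc (0 : ℝ) 1) : y + s • (x - y) ∈ cube A d := by
  intro i
  have h1 := hx i
  have h2 := hy i
  simp only [Pi.add_apply, Pi.smul_apply, Pi.sub_apply, smul_eq_mul, Set.mem_Icc] at *
  constructor
  · nlinarith [hs.1, hs.2]
  · nlinarith [hs.1, hs.2]

theorem holder_taylor {A : ℝ} (hA : 1 ≤ A) {d : ℕ} (hd : 1 ≤ d) {β K : ℝ} (hβ : 0 < β) {g : (Fin d → ℝ) → ℝ}
    (hg : memHolder A d β K g) :
    ∃ D : (j : ℕ) → (Fin j → Fin d) → (Fin d → ℝ) → ℝ,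
      (∀ j ≤ ⌊β⌋₊, ∀ γ, ∀ y ∈ cube A d, |D j γ y| ≤ 2 * K) ∧
      ∀ x ∈ cube A d, ∀ y ∈ cube A d,
        |g x - ∑ j ∈ Finset.range (⌊β⌋₊ + 1), ∑ γ : Fin j → Fin d, D j γ y * ∏ l, (x (γ l) - y (γ l))| ≤
          d ^ ⌊β⌋₊ * K * ‖x - y‖ ^ β := by
  classical
  unfold memHolder at hg
  set k := ⌊β⌋₊ with hk
  obtain ⟨hc, S, H, hS, hH, hSH⟩ := hg
  have hkβ : (k : ℝ) ≤ β := Nat.floor_le hβ.le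
  have zc : (0 : Fin d → ℝ) ∈ cube A d := by intro i; simp; linarith
  have oc : (fun _ => 1 : Fin d → ℝ) ∈ cube A d := by intro i; simp; constructor <;> linarith
  have S0 : ∀ α : Fin d → Fin (k + 1), ((∑ i, (α i : ℕ) : ℕ) : ℝ) < β → 0 ≤ S α :=
    fun α h => (abs_nonneg _).trans (hS α h 0 zc)
  have H0 : ∀ α : Fin d → Fin (k + 1), (∑ i, (α i : ℕ)) = k → 0 ≤ H α := by
    intro α h
    have hne : (0 : Fin d → ℝ) ≠ fun _ => 1 := by
      intro h; have := congrFun h ⟨0, hd⟩; simp at this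
    have := (abs_nonneg _).trans (hH α h 0 zc _ oc hne)
    have hp : 0 < ‖(0 : Fin d → ℝ) - fun _ => 1‖ ^ (β - (k : ℝ)) :=
      Real.rpow_pos_of_pos (norm_pos_iff.2 (sub_ne_zero.2 hne)) _
    nlinarith
  have Ssum : 0 ≤ (∑ α ∈ Finset.univ.filter
        (fun α : Fin d → Fin (k + 1) => ((∑ i, (α i : ℕ) : ℕ) : ℝ) < β), S α) :=
    Finset.sum_nonneg (fun α h => S0 α (Finset.mem_filter.1 h).2)
  have Hsum : 0 ≤ (∑ α ∈ Finset.univ.filter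
        (fun α : Fin d → Fin (k + 1) => (∑ i, (α i : ℕ)) = k), H α) :=
    Finset.sum_nonneg (fun α h => H0 α (Finset.mem_filter.1 h).2)
  have SK : ∀ α : Fin d → Fin (k + 1), ((∑ i, (α i : ℕ) : ℕ) : ℝ) < β → S α ≤ K := by
    intro α h
    have := Finset.single_le_sum (s := Finset.univ.filter
        (fun α : Fin d → Fin (k + 1) => ((∑ i, (α i : ℕ) : ℕ) : ℝ) < β)) (f := S)
        (fun α h => S0 α (Finset.mem_filter.1 h).2) (Finset.mem_filter.2 ⟨Finset.mem_univ α, h⟩)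
    linarith
  have HK : ∀ α : Fin d → Fin (k + 1), (∑ i, (α i : ℕ)) = k → H α ≤ K := by
    intro α h
    have := Finset.single_le_sum (s := Finset.univ.filter
        (fun α : Fin d → Fin (k + 1) => (∑ i, (α i : ℕ)) = k)) (f := H)
        (fun α h => H0 α (Finset.mem_filter.1 h).2) (Finset.mem_filter.2 ⟨Finset.mem_univ α, h⟩)
    linarith
  have hK0 : 0 ≤ K := by linarith
  -- list versions
  have hal : ∀ l : List (Fin d), l.length ≤ k → ∃ α : Fin d → Fin (k + 1),
      (∑ i, (α i : ℕ)) = l.length ∧ Dl l g = pderm (fun i => (α i : ℕ)) g := by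
    intro l hl
    refine ⟨fun i => ⟨l.count i, by have := List.count_le_length (a := i) (l := l); omega⟩, sum_count l, ?_⟩
    apply Dl_eq_pderm
    apply hc.of_le
    exact_mod_cast hl
  have b1 : ∀ l : List (Fin d), ((l.length : ℕ) : ℝ) < β → ∀ y ∈ cube A d, |Dl l g y| ≤ K := by
    intro l hl y hy
    obtain ⟨α, h1, h2⟩ := hal l (Nat.le_floor hl.le)
    rw [h2]
    rw [← h1] at hl
    exact (hS α hl y hy).trans (SK α hl)
  have b2 : ∀ l : List (Fin d), l.length = k → ∀ x ∈ cube A d, ∀ y ∈ cube A d,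
      |Dl l g x - Dl l g y| ≤ K * ‖x - y‖ ^ (β - (k : ℝ)) := by
    intro l hl x hx y hy
    by_cases hxy : x = y
    · subst hxy; simp; positivity
    obtain ⟨α, h1, h2⟩ := hal l hl.le
    rw [h2]
    rw [hl] at h1
    refine (hH α h1 x hx y hy hxy).trans ?_
    gcongr
    exact HK α h1
  have b3 : ∀ l : List (Fin d), l.length ≤ k → ∀ y ∈ cube A d, |Dl l g y| ≤ 2 * K := by
    intro l hl y hy
    rcases lt_or_ge ((l.length : ℕ) : ℝ) β with h | h
    · exact (b1 l h y hy).trans (by linarith)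
    have hlk : l.length = k := by
      apply le_antisymm hl
      have : (k : ℝ) ≤ l.length := hkβ.trans h
      exact_mod_cast this
    have hbk : β = k := by
      apply le_antisymm _ hkβ
      rw [← hlk]; exact h
    cases l with
    | nil => simp at h; linarith
    | cons i l =>
      have hll : ((l.length : ℕ) : ℝ) < β := by
        rw [hbk, ← hlk]; simp
      have hcl : ContDiff ℝ ((1 : ℕ) : ℕ∞) (Dl l g) := by
        apply contDiff_Dl
        apply hc.of_le
        norm_cast
        rw [← hlk]; simp; omega
      have hup : ∀ s ∈ Set.Icc (-A) A, Function.update y i s ∈ cube A d := by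
        intro s hs j
        by_cases hj : j = i
        · subst hj; simpa using hs
        · rw [Function.update_of_ne hj]; exact hy j
      have hder : ∀ s, HasDerivAt (fun s => Dl l g (Function.update y i s)) (Dl (i :: l) g (Function.update y i s)) s := by
        intro s
        have h1 := hasDerivAt_line hcl (Function.update y i 0) (Pi.single i 1) s
        have e : ∀ s : ℝ, Function.update y i 0 + s • (Pi.single i 1 : Fin d → ℝ) = Function.update y i s := by
          intro s; funext j
          by_cases hj : j = i
          · subst hj; simp
          · simp [hj]
        simp only [e] at h1
        have e2 : ∑ j, (Pi.single i 1 : Fin d → ℝ) j * pder j (Dl l g) (Function.update y i s) =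
            Dl (i :: l) g (Function.update y i s) := by
          rw [Finset.sum_eq_single i]
          · simp [Dl_cons]
          · intro b _ hb; simp [hb]
          · simp
        rw [e2] at h1
        exact h1
      obtain ⟨ξ, hξ, hξ2⟩ := exists_hasDerivAt_eq_slope (fun s => Dl l g (Function.update y i s))
        (fun s => Dl (i :: l) g (Function.update y i s)) (a := -A) (b := A) (by linarith)
        (fun s _ => (hder s).continuousAt.continuousWithinAt) (fun s _ => hder s)
      have c1 := b1 l hll _ (hup A (by simp; linarith))
      have c2 := b1 l hll _ (hup (-A) (by simp; linarith))
      have c3 : |Dl (i :: l) g (Function.update y i ξ)| ≤ K := by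
        rw [hξ2, abs_div, div_le_iff₀ (by rw [abs_pos]; linarith)]
        rw [abs_of_pos (show 0 < A - -A by linarith)]
        have := abs_le.1 c1
        have := abs_le.1 c2
        rw [abs_le]; constructor <;> nlinarith
      have c4 := b2 (i :: l) hlk y hy _ (hup ξ ⟨hξ.1.le, hξ.2.le⟩)
      rw [hbk, sub_self, Real.rpow_zero, mul_one] at c4
      have := abs_le.1 c3
      have := abs_le.1 c4
      rw [abs_le]; constructor <;> linarith
  refine ⟨fun j γ y => Dl (List.ofFn γ) g y / (j.factorial : ℝ), ?_, ?_⟩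
  · intro j hj γ y hy
    have h1 := b3 (List.ofFn γ) (by simpa using hj) y hy
    rw [abs_div]
    have : (1 : ℝ) ≤ (j.factorial : ℝ) := by exact_mod_cast Nat.one_le_iff_ne_zero.2 (Nat.factorial_ne_zero j)
    rw [abs_of_pos (show (0 : ℝ) < (j.factorial : ℝ) by linarith)]
    exact (div_le_self (abs_nonneg _) this).trans h1
  · intro x hx y hy
    have hnn : 0 ≤ ‖x - y‖ := norm_nonneg _
    have main := taylor1 (d ^ k * K * ‖x - y‖ ^ β) k
      (fun j s => ∑ γ : Fin j → Fin d, (∏ l, (x - y) (γ l)) * Dl (List.ofFn γ) g (y + s • (x - y)))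
      (fun j hj s => taylor_chain hc y (x - y) j hj s) ?_ 1 (by simp)
    · have e0 : y + (1 : ℝ) • (x - y) = x := by simp
      have e1 : y + (0 : ℝ) • (x - y) = y := by simp
      simp only [e0, e1] at main
      have e2 : ∑ γ : Fin 0 → Fin d, (∏ l, (x - y) (γ l)) * Dl (List.ofFn γ) g x = g x := by
        simp [Dl]
      rw [e2] at main
      convert main using 5 with j hj
      rw [Finset.sum_mul]
      apply Finset.sum_congr rfl
      intro γ _
      simp; ring
    · intro s hs
      have e1 : y + (0 : ℝ) • (x - y) = y := by simp
      simp only [e1]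
      rw [← Finset.sum_sub_distrib]
      refine (Finset.abs_sum_le_sum_abs _ _).trans ?_
      have hb : ∀ γ : Fin k → Fin d, |(∏ l, (x - y) (γ l)) * Dl (List.ofFn γ) g (y + s • (x - y)) -
          (∏ l, (x - y) (γ l)) * Dl (List.ofFn γ) g y| ≤ K * ‖x - y‖ ^ β := by
        intro γ
        rw [← mul_sub, abs_mul, Finset.abs_prod]
        have p1 : ∏ l, |(x - y) (γ l)| ≤ ‖x - y‖ ^ k := by
          refine (Finset.prod_le_prod (fun _ _ => abs_nonneg _) (fun l _ => norm_le_pi_norm (x - y) (γ l))).trans ?_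
          simp
        have p2 := b2 (List.ofFn γ) (by simp) _ (cube_line hx hy hs) y hy
        have p3 : ‖y + s • (x - y) - y‖ ≤ ‖x - y‖ := by
          rw [add_sub_cancel_left, norm_smul, Real.norm_eq_abs, abs_of_nonneg hs.1]
          nlinarith [hs.2]
        have p4 : |Dl (List.ofFn γ) g (y + s • (x - y)) - Dl (List.ofFn γ) g y| ≤ K * ‖x - y‖ ^ (β - (k : ℝ)) := by
          refine p2.trans ?_
          gcongr
        calc _ ≤ ‖x - y‖ ^ k * (K * ‖x - y‖ ^ (β - (k : ℝ))) :=
              mul_le_mul p1 p4 (abs_nonneg _) (by positivity)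
          _ = K * (‖x - y‖ ^ (k : ℝ) * ‖x - y‖ ^ (β - (k : ℝ))) := by
              rw [Real.rpow_natCast]; ring
          _ = K * ‖x - y‖ ^ β := by
              rw [← Real.rpow_add_of_nonneg hnn (by positivity) (by linarith)]
              congr 2; ring
      refine (Finset.sum_le_sum (fun γ _ => hb γ)).trans ?_
      simp [mul_assoc]

theorem bad_unique {J : ℕ} (hJ : 1 ≤ J) (u : ℝ) (hu : 0 ≤ u) (j j' : Fin J) (hjj : (j : ℕ) < j')
    (h : (⌊u + ((j : ℕ) : ℝ) / J⌋₊ : ℝ) + 1 - 1 / J < u + ((j : ℕ) : ℝ) / J)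
    (h' : (⌊u + ((j' : ℕ) : ℝ) / J⌋₊ : ℝ) + 1 - 1 / J < u + ((j' : ℕ) : ℝ) / J) : False := by
  have hJ' : (0 : ℝ) < J := by exact_mod_cast hJ
  have a1 := Nat.lt_floor_add_one (u + ((j : ℕ) : ℝ) / J)
  have a2 := Nat.lt_floor_add_one (u + ((j' : ℕ) : ℝ) / J)
  have d1 : ((j : ℕ) : ℝ) / J + 1 / J ≤ ((j' : ℕ) : ℝ) / J := by
    rw [← add_div]
    gcongr
    exact_mod_cast hjj
  have d2 : ((j' : ℕ) : ℝ) / J ≤ 1 - 1 / J := by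
    rw [le_sub_iff_add_le, ← add_div, div_le_one hJ']
    exact_mod_cast j'.2
  have d3 : 0 ≤ ((j : ℕ) : ℝ) / J := by positivity
  have hmono : ⌊u + ((j : ℕ) : ℝ) / J⌋₊ ≤ ⌊u + ((j' : ℕ) : ℝ) / J⌋₊ := by
    apply Nat.floor_le_floor
    have : 0 < 1 / (J : ℝ) := by positivity
    linarith
  rcases hmono.eq_or_lt with hh | hh
  · rw [← hh] at a2
    linarith
  · have : (⌊u + ((j : ℕ) : ℝ) / J⌋₊ : ℝ) + 1 ≤ ⌊u + ((j' : ℕ) : ℝ) / J⌋₊ := by exact_mod_cast hh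
    linarith

/-- the shift `j` is good for the point `u` -/
def Good {d J : ℕ} (u : Fin d → ℝ) (j : Fin J) : Prop :=
  ∀ i, u i + ((j : ℕ) : ℝ) / J ≤ (⌊u i + ((j : ℕ) : ℝ) / J⌋₊ : ℝ) + 1 - 1 / J

open Classical in
theorem good_card {d : ℕ} (u : Fin d → ℝ) (hu : ∀ i, 0 ≤ u i) :
    d + 1 ≤ (Finset.univ.filter (fun j : Fin (2 * d + 1) => Good u j)).card := by
  have h1 : (Finset.univ.filter (fun j : Fin (2 * d + 1) => ¬ Good u j)) ⊆
      Finset.univ.biUnion (fun i : Fin d => Finset.univ.filter (fun j : Fin (2 * d + 1) =>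
        (⌊u i + ((j : ℕ) : ℝ) / (2 * d + 1 : ℕ)⌋₊ : ℝ) + 1 - 1 / (2 * d + 1 : ℕ) < u i + ((j : ℕ) : ℝ) / (2 * d + 1 : ℕ))) := by
    intro j hj
    simp only [Finset.mem_filter, Finset.mem_univ, true_and, Good, not_forall, not_le] at hj
    obtain ⟨i, hi⟩ := hj
    simp only [Finset.mem_biUnion, Finset.mem_filter, Finset.mem_univ, true_and]
    exact ⟨i, hi⟩
  have h2 := (Finset.card_le_card h1).trans (Finset.card_biUnion_le_card_mul _ _ 1 ?_)
  · have h3 := Finset.card_filter_add_card_filter_not (s := (Finset.univ : Finset (Fin (2 * d + 1)))) (fun j => Good u j)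
    simp at h3 h2
    omega
  · intro i _
    rw [Finset.card_le_one]
    intro j hj j' hj'
    simp only [Finset.mem_filter, Finset.mem_univ, true_and] at hj hj'
    rcases lt_trichotomy (j : ℕ) j' with h | h | h
    · exact (bad_unique (by omega) (u i) (hu i) j j' h hj hj').elim
    · exact Fin.ext h
    · exact (bad_unique (by omega) (u i) (hu i) j' j h hj' hj).elim

theorem clip_dist {A x v : ℝ} (h1 : -A ≤ x) (h2 : x ≤ A) : |x - max (-A) (min A v)| ≤ |x - v| := by
  rcases le_total A v with h | h
  · rw [min_eq_left h, max_eq_right (by linarith), abs_of_nonpos (by linarith), abs_of_nonpos (by linarith)]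
    linarith
  · rw [min_eq_right h]
    rcases le_total (-A) v with h' | h'
    · rw [max_eq_right h']
    · rw [max_eq_left h', abs_of_nonneg (by linarith), abs_of_nonneg (by linarith)]
      linarith

theorem core_shift {A : ℝ} (hA : 1 ≤ A) {d : ℕ} (hd : 1 ≤ d) {β : ℝ} (hβ : 0 < β) {K : ℝ} (hK : 1 ≤ K)
    {J : ℕ} (hJ : 1 ≤ J) :
    ∃ C : ℕ, 2 ≤ C ∧ ∀ g, memHolder A d β K g → ∀ e : ℕ, 1 ≤ e → ∀ j : Fin J,
      ∃ φ : (Fin d → ℝ) → ℝ, Net C (C * (2 ^ e) ^ d) (C * (e + 1)) (fun x (_ : Unit) => φ x) ∧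
        ∀ x ∈ cube A d, Good (fun i => 4 ^ e * ((x i + A) / (4 * A))) j →
          |φ x - g x| ≤ C * ((2 : ℝ) ^ e) ^ (-(2 * β)) := by
  classical
  set k := ⌊β⌋₊ with hk
  let Γ := Σ j : Fin (k + 1), (Fin j → Fin d)
  have hA0 : 0 < A := by linarith
  obtain ⟨C1, hC1, look⟩ := lookup_net hd hJ (Fin d ⊕ Γ) (A + 2 * K) (by linarith)
  let p : MvPolynomial (Fin d ⊕ (Fin d ⊕ Γ)) ℝ := ∑ σ : Γ, MvPolynomial.X (Sum.inr (Sum.inr σ)) *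
    ∏ l, (MvPolynomial.X (Sum.inl (σ.2 l)) - MvPolynomial.X (Sum.inr (Sum.inl (σ.2 l))))
  obtain ⟨C2, hC2, -, hpoly⟩ := poly_net (A + 2 * K) (by linarith) p
  let cQ := Fintype.card (Fin d ⊕ Γ)
  refine ⟨(C1 + C2 + 4 * d + 2 * cQ) + (C1 + C2 * (⌈β⌉₊ + 1) + 3) + (⌈(d : ℝ) ^ k * K * (4 * A) ^ β⌉₊ + C2), by omega, ?_⟩
  set C := (C1 + C2 + 4 * d + 2 * cQ) + (C1 + C2 * (⌈β⌉₊ + 1) + 3) + (⌈(d : ℝ) ^ k * K * (4 * A) ^ β⌉₊ + C2) with hC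
  intro g hg e he j
  obtain ⟨D, hD1, hD2⟩ := holder_taylor hA hd hβ hg
  have hM1 : 1 ≤ 2 ^ e := Nat.one_le_two_pow
  have hMd : 1 ≤ (2 ^ e) ^ d := Nat.one_le_pow _ _ hM1
  have hJ0 : (0 : ℝ) < J := by exact_mod_cast hJ
  -- grid points
  let yy : (Fin d → Fin (2 ^ e)) → (Fin d → Fin (2 ^ e)) → Fin d → ℝ := fun c s i =>
    max (-A) (min A (4 * A * ((((c i : ℕ) : ℝ) * 2 ^ e + ((s i : ℕ) : ℝ)) / 4 ^ e - ((j : ℕ) : ℝ) / (J * 4 ^ e)) - A))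
  have hyy : ∀ c s, yy c s ∈ cube A d := by
    intro c s i
    refine ⟨le_max_left _ _, max_le (by linarith) (min_le_left _ _)⟩
  obtain ⟨φ, hφ, hφ2⟩ := look e (fun q c s => Sum.elim (fun i => yy c s i) (fun σ : Γ => D σ.1 σ.2 (yy c s)) q) (by
    rintro (i | σ) c s
    · have := hyy c s i
      simp only [Sum.elim_inl]
      rw [abs_le]; constructor <;> linarith [this.1, this.2]
    · have := hD1 σ.1 (by have := σ.1.2; omega) σ.2 _ (hyy c s)
      simp only [Sum.elim_inr]
      linarith)
  obtain ⟨ψ, hψ, hψ2⟩ := hpoly (⌈β⌉₊ * e)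
  let τ : (Fin d → ℝ) → Fin d → ℝ := fun x i => (x i + A) / (4 * A) + ((j : ℕ) : ℝ) / (J * 4 ^ e)
  have h41 : (1 : ℝ) ≤ 4 ^ e := one_le_pow₀ (by norm_num)
  have hjJ : ((j : ℕ) : ℝ) / J ≤ 1 := by
    rw [div_le_one hJ0]; exact_mod_cast j.2.le
  have hjJ0 : 0 ≤ ((j : ℕ) : ℝ) / J := by positivity
  have hCr : (3 : ℝ) ≤ C := by
    have : 3 ≤ C := by omega
    exact_mod_cast this
  have hτ : Lay (C : ℝ) τ := by
    refine ⟨fun k i => if i = k then 1 / (4 * A) else 0, fun _ => 1 / 4 + ((j : ℕ) : ℝ) / (J * 4 ^ e), ?_, ?_, ?_⟩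
    · intro k i; dsimp only; split_ifs
      · rw [abs_of_pos (by positivity)]
        have : 1 / (4 * A) ≤ 1 := by rw [div_le_one (by positivity)]; linarith
        linarith
      · simp
    · intro _
      have : ((j : ℕ) : ℝ) / (J * 4 ^ e) ≤ 1 := by
        rw [← div_div]
        exact (div_le_self hjJ0 h41).trans hjJ
      rw [abs_of_nonneg (by positivity)]
      linarith
    · intro x i
      simp [τ]
      field_simp
      ring
  let W := (C1 + C2 + 4 * d + 2 * cQ) * (2 ^ e) ^ d
  have hWle : ∀ w, w ≤ C1 + C2 + 4 * d + 2 * cQ → w * (2 ^ e) ^ d ≤ W := fun w h => Nat.mul_le_mul_right _ h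
  have hWle' : ∀ w, w ≤ C1 + C2 + 4 * d + 2 * cQ → w ≤ W := fun w h =>
    (Nat.le_mul_of_pos_right _ hMd).trans (hWle w h)
  have hC1C : (C1 : ℝ) ≤ C := by exact_mod_cast (by omega : C1 ≤ C)
  have hC2C : (C2 : ℝ) ≤ C := by exact_mod_cast (by omega : C2 ≤ C)
  have hτ0 : Net (C : ℝ) ((C1 + 2 * d) * (2 ^ e) ^ d) 0 τ := hτ
  have hl : 2 * d ≤ (C1 + 2 * d) * (2 ^ e) ^ d :=
    (show 2 * d ≤ C1 + 2 * d by omega).trans (Nat.le_mul_of_pos_right _ hMd)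
  have n1 := hτ0.comp (by simp; omega) (hφ.mono hC1C (Nat.mul_le_mul_right _ (by omega)))
  have nid : Net (C : ℝ) (2 * d) (0 + 1 + C1 * (e + 1)) (fun x : Fin d → ℝ => fun i => x i) := by
    have h0 : Net (C : ℝ) (2 * d) 0 (fun x : Fin d → ℝ => fun i => x i) := Lay.sel (by linarith) id
    exact h0.pad (by linarith) (by simp) (by omega)
  have n2 := (Net.sum nid n1 (by linarith)).mono (W' := W) le_rfl (by
    calc 2 * d + (C1 + 2 * d) * (2 ^ e) ^ d ≤ 2 * d * (2 ^ e) ^ d + (C1 + 2 * d) * (2 ^ e) ^ d :=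
          Nat.add_le_add_right (Nat.le_mul_of_pos_right _ hMd) _
      _ = (C1 + 4 * d) * (2 ^ e) ^ d := by ring
      _ ≤ W := hWle _ (by omega))
  have n3 := n2.comp (by
      have : Fintype.card (Fin d ⊕ (Fin d ⊕ Γ)) = d + cQ := by simp [cQ]
      rw [this]
      exact hWle' _ (by omega)) (hψ.mono hC2C (hWle' _ (by omega)))
  have hCW : W ≤ C * (2 ^ e) ^ d := Nat.mul_le_mul_right _ (by omega)
  refine ⟨fun x => ψ (Sum.elim (fun i => x i) (φ (τ x))), ?_, ?_⟩
  · refine (n3.mono le_rfl hCW).pad (by linarith) ?_ ?_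
    · simp only [Fintype.card_unit]
      have : 2 ≤ C := by omega
      nlinarith
    · have h1 : C1 + C2 * (⌈β⌉₊ + 1) + 3 ≤ C := by omega
      have : (C1 + C2 * (⌈β⌉₊ + 1) + 3) * (e + 1) ≤ C * (e + 1) := Nat.mul_le_mul_right _ h1
      refine le_trans ?_ this
      ring_nf
      nlinarith [Nat.zero_le (C2 * e)]
  · intro x hx hgood
    -- the cell
    let m : Fin d → ℕ := fun i => ⌊4 ^ e * ((x i + A) / (4 * A)) + ((j : ℕ) : ℝ) / J⌋₊
    have hu0 : ∀ i, 0 ≤ (x i + A) / (4 * A) := by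
      intro i
      have := (hx i).1
      apply div_nonneg <;> linarith
    have hu1 : ∀ i, (x i + A) / (4 * A) ≤ 1 / 2 := by
      intro i
      have := (hx i).2
      rw [div_le_div_iff₀ (by positivity) (by norm_num)]; linarith
    have hm1 : ∀ i, (m i : ℝ) ≤ 4 ^ e * ((x i + A) / (4 * A)) + ((j : ℕ) : ℝ) / J := by
      intro i
      exact Nat.floor_le (add_nonneg (mul_nonneg (by positivity) (hu0 i)) hjJ0)
    have h44 : (4 : ℝ) ≤ 4 ^ e := by
      calc (4 : ℝ) = 4 ^ 1 := by norm_num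
        _ ≤ 4 ^ e := pow_le_pow_right₀ (by norm_num) he
    have hm2 : ∀ i, m i < 2 ^ e * 2 ^ e := by
      intro i
      have h1 : (m i : ℝ) < 4 ^ e := by
        refine (hm1 i).trans_lt ?_
        have := mul_le_mul_of_nonneg_left (hu1 i) (show (0 : ℝ) ≤ 4 ^ e by positivity)
        linarith
      have h2 : ((2 ^ e * 2 ^ e : ℕ) : ℝ) = 4 ^ e := by
        push_cast; rw [← mul_pow]; norm_num
      rw [← h2] at h1
      exact_mod_cast h1
    let c : Fin d → Fin (2 ^ e) := fun i => ⟨m i / 2 ^ e, Nat.div_lt_of_lt_mul (hm2 i)⟩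
    let s : Fin d → Fin (2 ^ e) := fun i => ⟨m i % 2 ^ e, Nat.mod_lt _ hM1⟩
    have hcs : ∀ i, ((c i : ℕ) : ℝ) * 2 ^ e + ((s i : ℕ) : ℝ) = m i := by
      intro i
      have : m i / 2 ^ e * 2 ^ e + m i % 2 ^ e = m i := by
        rw [mul_comm]; exact Nat.div_add_mod _ _
      simp only [c, s]
      exact_mod_cast this
    have hτe : ∀ i, τ x i = (4 ^ e * ((x i + A) / (4 * A)) + ((j : ℕ) : ℝ) / J) / 4 ^ e := by
      intro i
      simp only [τ]
      field_simp
    have h4p : (0 : ℝ) < 4 ^ e := by positivity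
    have hlow : ∀ i, (m i : ℝ) / 4 ^ e ≤ τ x i := by
      intro i
      rw [hτe]
      gcongr
      exact hm1 i
    have hupp : ∀ i, τ x i ≤ ((m i : ℝ) + 1) / 4 ^ e - 1 / (J * 4 ^ e) := by
      intro i
      rw [hτe, ← div_div 1 (J : ℝ), ← sub_div]
      gcongr
      exact hgood i
    have hval := hφ2 (τ x) c s (fun i => by rw [hcs i]; exact ⟨hlow i, hupp i⟩)
    have hdist : ‖x - yy c s‖ ≤ 4 * A / 4 ^ e := by
      rw [pi_norm_le_iff_of_nonneg (by positivity)]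
      intro i
      rw [Real.norm_eq_abs, Pi.sub_apply]
      simp only [yy, hcs]
      refine (clip_dist (hx i).1 (hx i).2).trans ?_
      have e1 : x i - (4 * A * ((m i : ℝ) / 4 ^ e - ((j : ℕ) : ℝ) / (J * 4 ^ e)) - A) = 4 * A * (τ x i - (m i : ℝ) / 4 ^ e) := by
        simp only [τ]
        field_simp
        ring
      rw [e1]
      have l1 := hlow i
      have l2 := hupp i
      have l3 : 0 ≤ 1 / ((J : ℝ) * 4 ^ e) := by positivity
      rw [add_div] at l2
      rw [abs_of_nonneg (mul_nonneg (by linarith) (by linarith)), div_eq_mul_one_div (4 * A)]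
      apply mul_le_mul_of_nonneg_left _ (by linarith)
      linarith
    have hT := hD2 x hx _ (hyy c s)
    have hP := hψ2 (Sum.elim (fun i => x i) (φ (τ x))) (by
      rintro (i | q)
      · have := hx i
        simp only [Sum.elim_inl]
        rw [abs_le]; constructor <;> linarith [this.1, this.2]
      · simp only [Sum.elim_inr, hval]
        rcases q with i | σ
        · have := hyy c s i
          simp only [Sum.elim_inl]
          rw [abs_le]; constructor <;> linarith [this.1, this.2]
        · have := hD1 σ.1 (by have := σ.1.2; omega) σ.2 _ (hyy c s)
          simp only [Sum.elim_inr]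
          linarith)
    have hpe : MvPolynomial.eval (Sum.elim (fun i => x i) (φ (τ x))) p =
        ∑ j ∈ Finset.range (k + 1), ∑ γ : Fin j → Fin d, D j γ (yy c s) * ∏ l, (x (γ l) - yy c s (γ l)) := by
      rw [← Fin.sum_univ_eq_sum_range (fun j => ∑ γ : Fin j → Fin d, D j γ (yy c s) * ∏ l, (x (γ l) - yy c s (γ l)))]
      simp only [p, map_sum, map_mul, map_prod, map_sub, MvPolynomial.eval_X, Sum.elim_inl, Sum.elim_inr, hval]
      rw [Fintype.sum_sigma]
    rw [hpe] at hP
    have h2e : (0 : ℝ) < 2 ^ e := by positivity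
    have h2e1 : (1 : ℝ) ≤ 2 ^ e := one_le_pow₀ (by norm_num)
    have hpow : ((2 : ℝ) ^ e) ^ (-(2 * β)) = (1 / 4 ^ e) ^ β := by
      have : (1 : ℝ) / 4 ^ e = (2 ^ e) ^ (-2 : ℝ) := by
        rw [Real.rpow_neg h2e.le]
        rw [one_div]; congr 1
        rw [show ((2 : ℝ) ^ e) ^ (2 : ℝ) = (2 ^ e) ^ 2 from Real.rpow_natCast _ 2, ← pow_mul, mul_comm, pow_mul]
        norm_num
      rw [this, ← Real.rpow_mul h2e.le]
      congr 1; ring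
    have E1 : (d : ℝ) ^ k * K * ‖x - yy c s‖ ^ β ≤ ⌈(d : ℝ) ^ k * K * (4 * A) ^ β⌉₊ * ((2 : ℝ) ^ e) ^ (-(2 * β)) := by
      have : ‖x - yy c s‖ ^ β ≤ (4 * A) ^ β * ((2 : ℝ) ^ e) ^ (-(2 * β)) := by
        rw [hpow, ← Real.mul_rpow (by positivity) (by positivity), mul_one_div]
        exact Real.rpow_le_rpow (norm_nonneg _) hdist hβ.le
      calc _ ≤ (d : ℝ) ^ k * K * ((4 * A) ^ β * ((2 : ℝ) ^ e) ^ (-(2 * β))) := by gcongr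
        _ = (d : ℝ) ^ k * K * (4 * A) ^ β * ((2 : ℝ) ^ e) ^ (-(2 * β)) := by ring
        _ ≤ _ := by
          gcongr
          exact Nat.le_ceil _
    have E2 : (C2 : ℝ) / 4 ^ (⌈β⌉₊ * e) ≤ C2 * ((2 : ℝ) ^ e) ^ (-(2 * β)) := by
      rw [hpow, div_eq_mul_one_div]
      gcongr
      rw [mul_comm ⌈β⌉₊, pow_mul, ← one_div_pow, ← Real.rpow_natCast (1 / 4 ^ e)]
      apply Real.rpow_le_rpow_of_exponent_ge (by positivity)
      · rw [div_le_one h4p]; exact h41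
      · exact Nat.le_ceil β
    have E3 : ((⌈(d : ℝ) ^ k * K * (4 * A) ^ β⌉₊ : ℝ) + C2) * ((2 : ℝ) ^ e) ^ (-(2 * β)) ≤ C * ((2 : ℝ) ^ e) ^ (-(2 * β)) := by
      gcongr
      have : ⌈(d : ℝ) ^ k * K * (4 * A) ^ β⌉₊ + C2 ≤ C := by omega
      exact_mod_cast this
    have F1 := abs_le.1 (hT.trans E1)
    have F2 := abs_le.1 (hP.trans E2)
    refine le_trans ?_ E3
    rw [add_mul, abs_le]
    constructor <;> linarith [F1.1, F1.2, F2.1, F2.2]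

theorem core {A : ℝ} (hA : 1 ≤ A) {d : ℕ} (hd : 1 ≤ d) {β : ℝ} (hβ : 0 < β) {K : ℝ} (hK : 1 ≤ K) :
    ∃ C : ℕ, 2 ≤ C ∧ ∀ g, memHolder A d β K g → ∀ e : ℕ, 1 ≤ e →
      ∃ φ : (Fin d → ℝ) → ℝ, Net C (C * (2 ^ e) ^ d) (C * (e + 1)) (fun x (_ : Unit) => φ x) ∧
        ∀ x ∈ cube A d, |φ x - g x| ≤ C * ((2 : ℝ) ^ e) ^ (-(2 * β)) := by
  classical
  obtain ⟨C1, hC1, h1⟩ := core_shift hA hd hβ hK (J := 2 * d + 1) (by omega)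
  obtain ⟨med, ⟨C2, hC2, hm⟩, hmed⟩ := median_net d
  refine ⟨(2 * d + 1) * (C1 + 2) + (C1 + C2 + 1), by omega, ?_⟩
  set C := (2 * d + 1) * (C1 + 2) + (C1 + C2 + 1) with hC
  intro g hg e he
  choose φ hφ hφ2 using h1 g hg e he
  have hMd : 1 ≤ (2 ^ e) ^ d := Nat.one_le_pow _ _ Nat.one_le_two_pow
  have hC1C : (C1 : ℝ) ≤ C := by exact_mod_cast (by omega : C1 ≤ C)
  have hC2C : (C2 : ℝ) ≤ C := by exact_mod_cast (by omega : C2 ≤ C)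
  have hCr : (2 : ℝ) ≤ C := by exact_mod_cast (by omega : 2 ≤ C)
  have hCM : C ≤ C * (2 ^ e) ^ d := Nat.le_mul_of_pos_right _ hMd
  have n1 := (Net.fam (B := C) (by linarith) (fun i => (hφ i).mono hC1C le_rfl)).mono (W' := C * (2 ^ e) ^ d) le_rfl (by
    simp only [Finset.sum_const, Finset.card_univ, Fintype.card_fin, smul_eq_mul]
    rw [← mul_assoc]
    apply Nat.mul_le_mul_right
    rw [hC]
    nlinarith)
  have n2 := n1.comp (by
    simp only [Fintype.card_fin]
    refine le_trans ?_ hCM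
    rw [hC]; nlinarith) (hm.mono hC2C ((show C2 ≤ C by omega).trans hCM))
  refine ⟨fun x => med (fun i => φ i x), n2.pad (by linarith) ?_ ?_, ?_⟩
  · simp only [Fintype.card_unit]; omega
  · have : (C1 + C2 + 1) * (e + 1) ≤ C * (e + 1) := Nat.mul_le_mul_right _ (by omega)
    refine le_trans ?_ this
    nlinarith [Nat.zero_le ((C2 + 1) * e)]
  · intro x hx
    refine (hmed _ (g x) (C1 * ((2 : ℝ) ^ e) ^ (-(2 * β))) _ (good_card (fun i => 4 ^ e * ((x i + A) / (4 * A))) ?_) ?_).trans ?_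
    · intro i
      have := (hx i).1
      have h0 : 0 ≤ (x i + A) / (4 * A) := by apply div_nonneg <;> linarith
      positivity
    · intro j hj
      exact hφ2 j x hx (Finset.mem_filter.1 hj).2
    · gcongr

/-- integer depth scale -/
def TT (n : ℕ) : ℕ := ⌈Real.logb 2 n⌉₊

/-- integer width scale -/
def VV (P : Finset (ℝ × ℕ)) (hP : P.Nonempty) (n : ℕ) : ℕ := ⌈maxWidthExp P hP n⌉₊

theorem one_le_log {n : ℕ} (hn : 2 ≤ n) : 1 ≤ Real.logb 2 n := by
  rw [Real.le_logb_iff_rpow_le (by norm_num) (by positivity)]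
  simpa using (by exact_mod_cast hn : (2 : ℝ) ≤ n)

theorem one_le_TT {n : ℕ} (hn : 2 ≤ n) : 1 ≤ TT n := by
  have h1 := one_le_log hn
  exact Nat.one_le_iff_ne_zero.2 (Nat.pos_iff_ne_zero.1 (Nat.ceil_pos.2 (by linarith)))

theorem one_le_mwe (P : Finset (ℝ × ℕ)) (hP : P.Nonempty) (hPs : ∀ p ∈ P, 0 < p.1) {n : ℕ} (hn : 2 ≤ n) :
    1 ≤ maxWidthExp P hP n := by
  obtain ⟨p, hp⟩ := hP
  unfold maxWidthExp
  refine le_trans ?_ (Finset.le_sup' _ hp)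
  have := hPs p hp
  apply Real.one_le_rpow
  · exact_mod_cast (by omega : 1 ≤ n)
  · positivity

theorem one_le_VV (P : Finset (ℝ × ℕ)) (hP : P.Nonempty) (hPs : ∀ p ∈ P, 0 < p.1) {n : ℕ} (hn : 2 ≤ n) :
    1 ≤ VV P hP n := by
  have := one_le_mwe P hP hPs hn
  exact Nat.one_le_iff_ne_zero.2 (Nat.pos_iff_ne_zero.1 (Nat.ceil_pos.2 (by linarith)))

theorem maxRate_nonneg (P : Finset (ℝ × ℕ)) (hP : P.Nonempty) (n : ℕ) : 0 ≤ maxRate P hP n := by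
  obtain ⟨p, hp⟩ := hP
  unfold maxRate
  refine le_trans ?_ (Finset.le_sup' _ hp)
  positivity

theorem maxRate_small (P : Finset (ℝ × ℕ)) (hP : P.Nonempty) (hPs : ∀ p ∈ P, 0 < p.1) (c : ℝ) (hc : 0 < c) :
    ∃ n₀ : ℕ, ∀ n ≥ n₀, c * maxRate P hP n ≤ 1 := by
  have : ∀ p ∈ P, ∀ᶠ n : ℕ in Filter.atTop, (n : ℝ) ^ (-(p.1 / (2 * p.1 + p.2))) ≤ 1 / c := by
    intro p hp
    have h0 := hPs p hp
    have h1 : 0 < p.1 / (2 * p.1 + p.2) := by positivity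
    have := (tendsto_rpow_neg_atTop h1).comp (tendsto_natCast_atTop_atTop (R := ℝ))
    exact (this.eventually_lt_const (show 0 < 1 / c by positivity)).mono (fun n hn => hn.le)
  rw [← Filter.eventually_all_finset] at this
  obtain ⟨n₀, h⟩ := Filter.eventually_atTop.1 this
  refine ⟨n₀, fun n hn => ?_⟩
  have : maxRate P hP n ≤ 1 / c := Finset.sup'_le _ _ (fun p hp => h n hn p hp)
  rw [le_div_iff₀ hc] at this
  linarith

theorem core_p {A : ℝ} (hA : 1 ≤ A) {K : ℝ} (hK : 1 ≤ K) (P : Finset (ℝ × ℕ)) (hP : P.Nonempty)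
    (hPs : ∀ p ∈ P, 0 < p.1) (p : ℝ × ℕ) (hp : p ∈ P) (hd : 1 ≤ p.2) :
    ∃ C : ℕ, 2 ≤ C ∧ ∀ g, memHolder A p.2 p.1 K g → ∀ n : ℕ, 2 ≤ n →
      ∃ φ : (Fin p.2 → ℝ) → ℝ, Net C (C * VV P hP n) (C * TT n) (fun x (_ : Unit) => φ x) ∧
        ∀ x ∈ cube A p.2, |φ x - g x| ≤ C * maxRate P hP n := by
  obtain ⟨β, d⟩ := p
  have hβ : 0 < β := hPs _ hp
  dsimp only at *
  obtain ⟨C, hC, h⟩ := core (d := d) hA hd hβ hK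
  refine ⟨C * 2 ^ d + 2 * C, by omega, ?_⟩
  intro g hg n hn
  have hlog := one_le_log hn
  have hT := one_le_TT hn
  have hV := one_le_VV P hP hPs hn
  have hd1 : (1 : ℝ) ≤ d := by exact_mod_cast hd
  set b : ℝ := 2 * (2 * β + d) with hb
  have hb1 : 1 ≤ b := by linarith
  set e : ℕ := ⌈Real.logb 2 n / b⌉₊ with he
  have he1 : 1 ≤ e := Nat.one_le_iff_ne_zero.2 (Nat.pos_iff_ne_zero.1 (Nat.ceil_pos.2 (by positivity)))
  have heT : e ≤ TT n := Nat.ceil_le_ceil (div_le_self (by linarith) hb1)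
  have hn0 : (0 : ℝ) < n := by positivity
  have hn1 : (1 : ℝ) ≤ n := by exact_mod_cast (by omega : 1 ≤ n)
  have hroot : (2 : ℝ) ^ (Real.logb 2 n / b) = (n : ℝ) ^ (1 / b) := by
    rw [div_eq_mul_one_div, Real.rpow_mul (by norm_num), Real.rpow_logb (by norm_num) (by norm_num) hn0]
  have h2low : (n : ℝ) ^ (1 / b) ≤ 2 ^ e := by
    rw [← hroot, ← Real.rpow_natCast]
    exact Real.rpow_le_rpow_of_exponent_le (by norm_num) (Nat.le_ceil _)
  have h2up : (2 : ℝ) ^ e ≤ 2 * (n : ℝ) ^ (1 / b) := by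
    rw [← hroot, ← Real.rpow_natCast]
    have : ((e : ℕ) : ℝ) ≤ Real.logb 2 n / b + 1 := (Nat.ceil_lt_add_one (by positivity)).le
    calc (2 : ℝ) ^ ((e : ℕ) : ℝ) ≤ 2 ^ (Real.logb 2 n / b + 1) :=
          Real.rpow_le_rpow_of_exponent_le (by norm_num) this
      _ = _ := by rw [Real.rpow_add (by norm_num), Real.rpow_one]; ring
  have hwid : (2 ^ e) ^ d ≤ 2 ^ d * VV P hP n := by
    have h1 : ((2 : ℝ) ^ e) ^ d ≤ 2 ^ d * VV P hP n := by
      calc ((2 : ℝ) ^ e) ^ d ≤ (2 * (n : ℝ) ^ (1 / b)) ^ d := by gcongr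
        _ = 2 ^ d * ((n : ℝ) ^ (1 / b)) ^ (d : ℝ) := by rw [mul_pow, Real.rpow_natCast]
        _ = 2 ^ d * (n : ℝ) ^ ((d : ℝ) / b) := by
          rw [← Real.rpow_mul hn0.le]; congr 2; ring
        _ ≤ 2 ^ d * VV P hP n := by
          gcongr
          refine le_trans ?_ (Nat.le_ceil _)
          exact Finset.le_sup' (fun p : ℝ × ℕ => (n : ℝ) ^ ((p.2 : ℝ) / (2 * (2 * p.1 + p.2)))) hp
    exact_mod_cast h1
  have hrate : ((2 : ℝ) ^ e) ^ (-(2 * β)) ≤ maxRate P hP n := by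
    calc ((2 : ℝ) ^ e) ^ (-(2 * β)) ≤ ((n : ℝ) ^ (1 / b)) ^ (-(2 * β)) :=
          Real.rpow_le_rpow_of_nonpos (by positivity) h2low (by linarith)
      _ = (n : ℝ) ^ (-(β / (2 * β + d))) := by
        rw [← Real.rpow_mul hn0.le]; congr 1
        rw [hb]; field_simp
      _ ≤ _ := Finset.le_sup' (fun p : ℝ × ℕ => (n : ℝ) ^ (-(p.1 / (2 * p.1 + p.2)))) hp
  obtain ⟨φ, hφ, hφ2⟩ := h g hg e he1
  have hCC : (C : ℝ) ≤ ((C * 2 ^ d + 2 * C : ℕ) : ℝ) := by exact_mod_cast (by omega : C ≤ C * 2 ^ d + 2 * C)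
  refine ⟨φ, (hφ.mono hCC ?_).pad ?_ ?_ ?_, ?_⟩
  · calc C * (2 ^ e) ^ d ≤ C * (2 ^ d * VV P hP n) := Nat.mul_le_mul_left _ hwid
      _ = C * 2 ^ d * VV P hP n := by ring
      _ ≤ _ := Nat.mul_le_mul_right _ (by omega)
  · exact_mod_cast (by omega : 1 ≤ C * 2 ^ d + 2 * C)
  · simp only [Fintype.card_unit]
    have : 2 ≤ C * 2 ^ d + 2 * C := by omega
    nlinarith
  · calc C * (e + 1) ≤ C * (2 * TT n) := Nat.mul_le_mul_left _ (by omega)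
      _ = 2 * C * TT n := by ring
      _ ≤ _ := Nat.mul_le_mul_right _ (by omega)
  · intro x hx
    refine (hφ2 x hx).trans ?_
    have := maxRate_nonneg P hP n
    gcongr

theorem core_P {A : ℝ} (hA : 1 ≤ A) {K : ℝ} (hK : 1 ≤ K) (P : Finset (ℝ × ℕ)) (hP : P.Nonempty)
    (hPs : ∀ p ∈ P, 0 < p.1) (hPd : ∀ p ∈ P, 1 ≤ p.2) :
    ∃ C : ℕ, 2 ≤ C ∧ ∀ p ∈ P, ∀ g, memHolder A p.2 p.1 K g → ∀ n : ℕ, 2 ≤ n →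
      ∃ φ : (Fin p.2 → ℝ) → ℝ, Net C (C * VV P hP n) (C * TT n) (fun x (_ : Unit) => φ x) ∧
        ∀ x ∈ cube A p.2, |φ x - g x| ≤ C * maxRate P hP n := by
  have h0 := fun p hp => core_p hA hK P hP hPs p hp (hPd p hp)
  choose! f hf using h0
  refine ⟨P.sup f, ?_, ?_⟩
  · obtain ⟨p, hp⟩ := hP
    exact (hf p hp).1.trans (Finset.le_sup hp)
  · intro p hp g hg n hn
    obtain ⟨h2, h⟩ := hf p hp
    obtain ⟨φ, hφ, hφ2⟩ := h g hg n hn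
    have hle : f p ≤ P.sup f := Finset.le_sup hp
    have hler : (f p : ℝ) ≤ (P.sup f : ℕ) := by exact_mod_cast hle
    have hV := one_le_VV P hP hPs hn
    refine ⟨φ, (hφ.mono hler (Nat.mul_le_mul_right _ hle)).pad ?_ ?_ (Nat.mul_le_mul_right _ hle), ?_⟩
    · exact_mod_cast (by omega : 1 ≤ P.sup f)
    · simp only [Fintype.card_unit]
      have : 2 ≤ P.sup f := by omega
      nlinarith
    · intro x hx
      refine (hφ2 x hx).trans ?_
      have := maxRate_nonneg P hP n
      gcongr

theorem sqrt_bound {m : ℕ} (y z : Fin m → ℝ) (c : ℝ) (hc : 0 ≤ c) (h : ∀ j, |y j - z j| ≤ c) :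
    Real.sqrt (∑ j, (y j - z j) ^ 2) ≤ m * c := by
  rw [Real.sqrt_le_left (by positivity)]
  calc ∑ j, (y j - z j) ^ 2 ≤ ∑ j : Fin m, c ^ 2 := by
        apply Finset.sum_le_sum
        intro j _
        rw [← sq_abs]
        gcongr
        exact h j
    _ = m * c ^ 2 := by simp
    _ ≤ (m * m) * c ^ 2 := by
        gcongr
        rcases Nat.eq_zero_or_pos m with h | h
        · subst h; simp
        · exact_mod_cast Nat.le_mul_of_pos_right m h
    _ = _ := by ring

theorem level_net (a : ℝ) (ha : 1 ≤ a) (d : ℕ)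
    (q : ℕ) (N : ℕ → ℕ) (P : Finset (ℝ × ℕ)) (hP : P.Nonempty)
    (dmax : ℕ) (hPs : ∀ p ∈ P, 0 < p.1) (hPd : ∀ p ∈ P, 1 ≤ p.2 ∧ p.2 ≤ dmax)
    (K F CLip : ℝ) (hK : 1 ≤ K) (hF : 1 ≤ F) (hCLip : 1 ≤ CLip) (l : ℕ) :
    ∃ C : ℕ, 2 ≤ C ∧ ∃ n₀ : ℕ, 2 ≤ n₀ ∧ ∀ (fl : ℕ → ℕ → (Fin d → ℝ) → ℝ)
      (βh : ℕ → ℕ → ℝ) (dh : ℕ → ℕ → ℕ)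
      (g : (l : ℕ) → (i : ℕ) → (Fin (dh l i) → ℝ) → ℝ),
      (∀ i < N 0, ∃ j : Fin d, ∀ x, fl 0 i x = x j) →
      (∀ l, 1 ≤ l → l ≤ q → ∀ i < N l,
        (βh l i, dh l i) ∈ P ∧
        (∀ y z : Fin (dh l i) → ℝ,
          |g l i y - g l i z| ≤ CLip * Real.sqrt (∑ j, (y j - z j) ^ 2)) ∧
        memHolder (max a (2 * F)) (dh l i) (βh l i) K (g l i) ∧
        (∀ y, |g l i y| ≤ F) ∧
        (∀ x, fl l i x =
          g l i (fun j => fl (l - 1) ((∑ i' ∈ Finset.range i, dh l i') + j) x))) →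
      (∀ l, 1 ≤ l → l ≤ q → (∑ i ∈ Finset.range (N l), dh l i) = N (l - 1)) →
      l ≤ q → ∀ n ≥ n₀, ∃ φ : (Fin d → ℝ) → Fin (N l) → ℝ,
        Net C (C * VV P hP n) (C * TT n) φ ∧ ∀ x ∈ cube a d, ∀ i : Fin (N l),
          |φ x i - fl l i x| ≤ C * maxRate P hP n ∧ |φ x i| ≤ max a (2 * F) := by
  have hA : 1 ≤ max a (2 * F) := ha.trans (le_max_left _ _)
  induction l with
  | zero =>
    refine ⟨2 + 2 * N 0, by omega, 2, le_rfl, ?_⟩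
    intro fl βh dh g h0 _ _ _ n hn
    have h0' : ∀ i : Fin (N 0), ∃ j : Fin d, ∀ x, fl 0 i x = x j := fun i => h0 i i.2
    choose e he using h0'
    have hC1 : (1 : ℝ) ≤ (2 + 2 * N 0 : ℕ) := by exact_mod_cast (by omega : 1 ≤ 2 + 2 * N 0)
    have hV := one_le_VV P hP hPs hn
    have n0 : Net ((2 + 2 * N 0 : ℕ) : ℝ) ((2 + 2 * N 0) * VV P hP n) 0 (fun (x : Fin d → ℝ) i => x (e i)) :=
      Lay.sel hC1 e
    refine ⟨fun x i => x (e i), n0.pad hC1 ?_ (by omega), ?_⟩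
    · simp only [Fintype.card_fin]
      nlinarith
    · intro x hx i
      have := maxRate_nonneg P hP n
      dsimp only
      rw [he i x, sub_self, abs_zero]
      refine ⟨by positivity, ?_⟩
      exact (abs_le.2 (hx (e i))).trans (le_max_left _ _)
  | succ l ih =>
    obtain ⟨C0, hC0, n0, hn0, ih⟩ := ih
    obtain ⟨C1, hC1, hcore⟩ := core_P hA hK P hP hPs (fun p hp => (hPd p hp).1)
    let c := ⌈CLip * (dmax * C0)⌉₊
    let C := (N (l + 1) + 1) * (C1 + 2 * dmax) + (C0 + C1 + 2) + 2 * N l + 2 * N (l + 1) + (C1 + c)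
    obtain ⟨n1, hn1⟩ := maxRate_small P hP hPs C (by
      have : 0 < C := by omega
      exact_mod_cast this)
    refine ⟨C, by omega, max n0 n1, le_max_of_le_left hn0, ?_⟩
    intro fl βh dh g h0 h1 h2 hl n hn
    have hn0' : n0 ≤ n := (le_max_left _ _).trans hn
    have hn2 : 2 ≤ n := hn0.trans hn0'
    obtain ⟨φ, hφ, hφ2⟩ := ih fl βh dh g h0 h1 h2 (by omega) n hn0'
    have hV := one_le_VV P hP hPs hn2
    have hT := one_le_TT hn2
    have hR := maxRate_nonneg P hP n
    have hlev := h1 (l + 1) (by omega) hl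
    have hsum := h2 (l + 1) (by omega) hl
    simp only [Nat.add_sub_cancel] at hlev hsum
    have hψ : ∀ i : Fin (N (l + 1)), ∃ ψ : (Fin (dh (l + 1) i) → ℝ) → ℝ,
        Net C1 (C1 * VV P hP n) (C1 * TT n) (fun x (_ : Unit) => ψ x) ∧
        ∀ x ∈ cube (max a (2 * F)) (dh (l + 1) i), |ψ x - g (l + 1) i x| ≤ C1 * maxRate P hP n :=
      fun i => hcore _ (hlev i i.2).1 _ (hlev i i.2).2.2.1 n hn2
    choose ψ hψ1 hψ2 using hψ
    have hoff : ∀ i : Fin (N (l + 1)), ∀ j : Fin (dh (l + 1) i),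
        (∑ i' ∈ Finset.range i, dh (l + 1) i') + j < N l := by
      intro i j
      rw [← hsum]
      calc (∑ i' ∈ Finset.range i, dh (l + 1) i') + j < (∑ i' ∈ Finset.range i, dh (l + 1) i') + dh (l + 1) i := by
            have := j.2; omega
        _ = ∑ i' ∈ Finset.range (i + 1), dh (l + 1) i' := by rw [Finset.sum_range_succ]
        _ ≤ _ := by
          apply Finset.sum_le_sum_of_subset
          intro k hk
          have := i.2
          simp only [Finset.mem_range] at *
          omega
    let sel : ∀ i : Fin (N (l + 1)), Fin (dh (l + 1) i) → Fin (N l) := fun i j =>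
      ⟨(∑ i' ∈ Finset.range i, dh (l + 1) i') + j, hoff i j⟩
    have hdm : ∀ i : Fin (N (l + 1)), dh (l + 1) i ≤ dmax := fun i => (hPd _ (hlev i i.2).1).2
    have hCle : (C1 : ℝ) ≤ C := by exact_mod_cast (by omega : C1 ≤ C)
    have hC0le : (C0 : ℝ) ≤ C := by exact_mod_cast (by omega : C0 ≤ C)
    have hC1r : (1 : ℝ) ≤ C := by exact_mod_cast (by omega : 1 ≤ C)
    have hCV : C ≤ C * VV P hP n := Nat.le_mul_of_pos_right _ hV
    have m1 : ∀ i, Net (C : ℝ) ((C1 + 2 * dmax) * VV P hP n) (C1 * TT n + 1)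
        (fun (x : Fin (N l) → ℝ) (_ : Unit) => ψ i (fun j => x (sel i j))) := by
      intro i
      apply Net.presel ((hψ1 i).mono hCle (Nat.mul_le_mul_right _ (by omega))) hC1r
      simp only [Fintype.card_fin]
      have := hdm i
      nlinarith
    have m2 := (Net.fam (by linarith) m1).mono (W' := C * VV P hP n) le_rfl (by
      simp only [Finset.sum_const, Finset.card_univ, Fintype.card_fin, smul_eq_mul]
      rw [← mul_assoc]
      apply Nat.mul_le_mul_right
      have : N (l + 1) * (C1 + 2 * dmax) ≤ (N (l + 1) + 1) * (C1 + 2 * dmax) := Nat.mul_le_mul_right _ (by omega)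
      omega)
    have m3 := (hφ.mono hC0le (Nat.mul_le_mul_right _ (by omega : C0 ≤ C))).comp (by
      simp only [Fintype.card_fin]
      omega) m2
    have key : ∀ x ∈ cube a d, ∀ i : Fin (N (l + 1)),
        |ψ i (fun j => φ x (sel i j)) - fl (l + 1) i x| ≤ C * maxRate P hP n := by
      intro x hx i
      obtain ⟨hp, hLip, hHol, hbd, hval⟩ := hlev i i.2
      rw [hval x]
      have e1 := hψ2 i (fun j => φ x (sel i j)) (fun j => abs_le.1 (hφ2 x hx (sel i j)).2)
      have e2 := hLip (fun j => φ x (sel i j)) (fun j => fl l ((∑ i' ∈ Finset.range i, dh (l + 1) i') + j) x)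
      have e3 := sqrt_bound (fun j => φ x (sel i j)) (fun j => fl l ((∑ i' ∈ Finset.range i, dh (l + 1) i') + j) x)
        (C0 * maxRate P hP n) (by positivity) (fun j => (hφ2 x hx (sel i j)).1)
      have e4 : CLip * ((dh (l + 1) i : ℝ) * (C0 * maxRate P hP n)) ≤ c * maxRate P hP n := by
        have hdr : (dh (l + 1) i : ℝ) ≤ dmax := by exact_mod_cast hdm i
        calc CLip * ((dh (l + 1) i : ℝ) * (C0 * maxRate P hP n)) ≤ CLip * ((dmax : ℝ) * (C0 * maxRate P hP n)) := by
              gcongr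
          _ = CLip * (dmax * C0) * maxRate P hP n := by ring
          _ ≤ _ := by
            gcongr
            exact Nat.le_ceil _
      have e5 := e2.trans ((mul_le_mul_of_nonneg_left e3 (by linarith)).trans e4)
      have e6 : ((C1 : ℝ) + c) * maxRate P hP n ≤ C * maxRate P hP n := by
        gcongr
        exact_mod_cast (by omega : C1 + c ≤ C)
      have f1 := abs_le.1 e1
      have f2 := abs_le.1 e5
      refine le_trans ?_ e6
      rw [add_mul, abs_le]
      constructor <;> linarith [f1.1, f1.2, f2.1, f2.2]
    refine ⟨fun x i => ψ i (fun j => φ x (sel i j)), m3.pad hC1r ?_ ?_, ?_⟩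
    · simp only [Fintype.card_fin]
      omega
    · have : (C0 + C1 + 2) * TT n ≤ C * TT n := Nat.mul_le_mul_right _ (by omega)
      refine le_trans ?_ this
      nlinarith
    · intro x hx i
      refine ⟨key x hx i, ?_⟩
      have k1 := (key x hx i).trans (hn1 n ((le_max_right _ _).trans hn))
      obtain ⟨hp, hLip, hHol, hbd, hval⟩ := hlev i i.2
      have k2 : |fl (l + 1) i x| ≤ F := by rw [hval x]; exact hbd _
      refine le_trans ?_ (le_max_right _ _)
      have f1 := abs_le.1 k1
      have f2 := abs_le.1 k2
      dsimp only
      rw [abs_le]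
      constructor <;> linarith [f1.1, f1.2, f2.1, f2.2]
/-- approximation of hierarchical composition functions by fully connected
Leaky-ReLU networks with bounded parameters.  There are constants `C̃_L, C̃_r, C̃_B, c₂ > 0`
such that every `f₀` following `H(N, P)` is, for every sufficiently large `n`, approximated
within `c₂ · max_{(β',d') ∈ P} n^{−β'/(2β'+d')}` in sup-norm on `[−a,a]^d` by a network in
`F_{ρν}^{DNN}(⌈C̃_L log₂ n⌉, ⌈C̃_r · max_{(β',d') ∈ P} n^{d'/(2(2β'+d'))}⌉, C̃_B)`. -/
theorem dnn_approximation_of_hierarchical_composition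
    (a : ℝ) (ha : 1 ≤ a) (d : ℕ) (hd : 0 < d) (ν : ℝ) (hν0 : 0 ≤ ν) (hν1 : ν < 1)
    (q : ℕ) (N : ℕ → ℕ) (P : Finset (ℝ × ℕ)) (hP : P.Nonempty)
    (βmin βmax : ℝ) (dmax : ℕ) (hβmin : 0 < βmin)
    (hPsub : ∀ p ∈ P, βmin ≤ p.1 ∧ p.1 ≤ βmax ∧ 1 ≤ p.2 ∧ p.2 ≤ dmax)
    (K F CLip : ℝ) (hK : 1 ≤ K) (hF : 1 ≤ F) (hCLip : 1 ≤ CLip) :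
    ∃ CL Cr CB c₂ : ℝ, 0 < CL ∧ 0 < Cr ∧ 0 < CB ∧ 0 < c₂ ∧
      ∀ f₀ : (Fin d → ℝ) → ℝ, followsHCS a d q N P K F CLip f₀ →
        ∃ n₀ : ℕ, ∀ n : ℕ, n₀ ≤ n →
          ∃ f : (Fin d → ℝ) → ℝ,
            memDNN ν d ⌈CL * Real.logb 2 n⌉₊ ⌈Cr * maxWidthExp P hP n⌉₊ CB f ∧
            ∀ x ∈ cube a d, |f x - f₀ x| ≤ c₂ * maxRate P hP n := by
  have hPs : ∀ p ∈ P, 0 < p.1 := fun p hp => lt_of_lt_of_le hβmin (hPsub p hp).1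
  have hPd : ∀ p ∈ P, 1 ≤ p.2 ∧ p.2 ≤ dmax := fun p hp => (hPsub p hp).2.2
  obtain ⟨C, hC2, n₀, hn₀, H⟩ := level_net a ha d q N P hP dmax hPs hPd K F CLip hK hF hCLip q
  have hCr : (2 : ℝ) ≤ C := by exact_mod_cast hC2
  have hC0 : (0 : ℝ) < C := by linarith
  have hν : 0 < 1 - ν ^ 2 := by nlinarith
  refine ⟨2 * C, 4 * C, C / (1 - ν ^ 2), C, by positivity, by positivity, by positivity, hC0, ?_⟩
  rintro f₀ ⟨hq, hNq, fl, βh, dh, g, h0, h1, h2, hf⟩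
  refine ⟨n₀, fun n hn => ?_⟩
  obtain ⟨φ, hφ, hφe⟩ := H fl βh dh g h0 h1 h2 le_rfl n hn
  have hn2 : 2 ≤ n := le_trans hn₀ hn
  have hlog := one_le_log hn2
  have hmw := one_le_mwe P hP hPs hn2
  have hT : (TT n : ℝ) ≤ 2 * Real.logb 2 n := by
    have := (Nat.ceil_lt_add_one (by linarith : (0 : ℝ) ≤ Real.logb 2 n)).le
    unfold TT; linarith
  have hV : (VV P hP n : ℝ) ≤ 2 * maxWidthExp P hP n := by
    have := (Nat.ceil_lt_add_one (by linarith : (0 : ℝ) ≤ maxWidthExp P hP n)).le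
    unfold VV; linarith
  have hV1 : 1 ≤ VV P hP n := Nat.one_le_ceil_iff.mpr (by linarith)
  have hL : C * TT n ≤ ⌈2 * (C : ℝ) * Real.logb 2 n⌉₊ := by
    have : ((C * TT n : ℕ) : ℝ) ≤ 2 * (C : ℝ) * Real.logb 2 n := by
      push_cast; nlinarith
    exact_mod_cast this.trans (Nat.le_ceil _)
  have hW : 2 * (C * VV P hP n) ≤ ⌈4 * (C : ℝ) * maxWidthExp P hP n⌉₊ := by
    have : ((2 * (C * VV P hP n) : ℕ) : ℝ) ≤ 4 * (C : ℝ) * maxWidthExp P hP n := by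
      push_cast; nlinarith
    exact_mod_cast this.trans (Nat.le_ceil _)
  have hLpos : 0 < ⌈2 * (C : ℝ) * Real.logb 2 n⌉₊ := Nat.ceil_pos.mpr (by positivity)
  have hz : 0 < N q := by omega
  have hnet : Net (C : ℝ) (C * VV P hP n) (C * TT n)
      (fun x (_ : Unit) => φ x ⟨0, hz⟩) := hφ.reindex (fun _ : Unit => (⟨0, hz⟩ : Fin (N q)))
  have hcard : 2 * Fintype.card Unit ≤ C * VV P hP n := by
    simp only [Fintype.card_unit]; nlinarith
  refine ⟨fun x => φ x ⟨0, hz⟩, Net.memDNN hν0 hν1 hC0.le le_rfl hW hLpos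
    (hnet.pad (by linarith) hcard hL), fun x hx => ?_⟩
  have := (hφe x hx ⟨0, hz⟩).1
  rw [hf]
  exact this
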